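/- Let n ≥ 17 be fixed and let m, σ > 0 satisfy 2/√n < σ/m < 1/2. Let (Y_d)_{d≥1} be a unitarily invariant sequence of random self-adjoint matrices Y_d ∈ M_n(ℂ) ⊗ M_d(ℂ) converging strongly to the semicircular distribution SC_{m,σ} (for instance Y_d = m·I_{nd} + σ·X_d with X_d a standard GUE matrix). Then almost surely, for all sufficiently large d, Y_d is positive semidefinite, Y_d ∈ PPT_{n,d}, and Y_d ∉ SEP_{n,d}. -/

import Mathlib

open MeasureTheory Filter Topology Polynomial Matrix Kronecker
open scoped ComplexOrder

noncomputable section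

/-- Measurable space structure on matrices (entrywise). -/
instance matMS (m n : Type*) : MeasurableSpace (Matrix m n ℂ) :=
  inferInstanceAs (MeasurableSpace (m → n → ℂ))

/-- The ℓ²→ℓ² operator norm of a complex square matrix. -/
def opNorm {N : Type*} [Fintype N] [DecidableEq N] (X : Matrix N N ℂ) : ℝ :=
  ‖Matrix.toEuclideanCLM (𝕜 := ℂ) (n := N) X‖

/-- Application of a real polynomial to a complex square matrix. -/
def polyApply {N : Type*} [Fintype N] [DecidableEq N] (P : Polynomial ℝ)
    (X : Matrix N N ℂ) : Matrix N N ℂ :=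
  Polynomial.aeval X (P.map (algebraMap ℝ ℂ))

/-- The (topological) support of a measure on ℝ: points all of whose open
neighbourhoods have positive measure. -/
def msupport (μ : Measure ℝ) : Set ℝ :=
  {x | ∀ U : Set ℝ, IsOpen U → x ∈ U → 0 < μ U}

/-- Strong convergence of a sequence of random matrices `X d ∈ M_n(ℂ) ⊗ M_d(ℂ)`
towards a compactly supported probability measure `μ`: almost surely, for every
real polynomial `P`, the normalized traces of `P(X d)` converge to `∫ P dμ` and the
operator norms of `P(X d)` converge to `sup {|P(x)| : x ∈ supp μ}`. -/
def StrongConv {Ω : Type*} [MeasurableSpace Ω] (ℙ : Measure Ω) (n : ℕ)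
    (X : (d : ℕ) → Ω → Matrix (Fin n × Fin d) (Fin n × Fin d) ℂ)
    (μ : Measure ℝ) : Prop :=
  ∀ᵐ ω ∂ℙ, ∀ P : Polynomial ℝ,
    Tendsto (fun d : ℕ => ((n : ℂ) * (d : ℂ))⁻¹ * (polyApply P (X d ω)).trace) atTop
      (𝓝 ((∫ x, P.eval x ∂μ : ℝ) : ℂ)) ∧
    Tendsto (fun d : ℕ => opNorm (polyApply P (X d ω))) atTop
      (𝓝 (sSup ((fun x => |P.eval x|) '' msupport μ)))

/-- Unitary invariance of a sequence of random matrices: for every `d` and every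
unitary `U`, the random matrix `U (X d) U*` has the same distribution as `X d`. -/
def UnitInv {Ω : Type*} [MeasurableSpace Ω] (ℙ : Measure Ω) (n : ℕ)
    (X : (d : ℕ) → Ω → Matrix (Fin n × Fin d) (Fin n × Fin d) ℂ) : Prop :=
  ∀ d : ℕ, ∀ U : Matrix (Fin n × Fin d) (Fin n × Fin d) ℂ,
    U ∈ unitary (Matrix (Fin n × Fin d) (Fin n × Fin d) ℂ) →
    Measure.map (fun ω => U * X d ω * star U) ℙ = Measure.map (X d) ℙ

/-- The separable cone `SEP_{n,d}`. -/
def SEP (n d : ℕ) : Set (Matrix (Fin n × Fin d) (Fin n × Fin d) ℂ) :=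
  {X | ∃ (k : ℕ) (A : Fin k → Matrix (Fin n) (Fin n) ℂ)
      (B : Fin k → Matrix (Fin d) (Fin d) ℂ),
    (∀ i, (A i).PosSemidef) ∧ (∀ i, (B i).PosSemidef) ∧ X = ∑ i, A i ⊗ₖ B i}

/-- The partial transpose on `M_n(ℂ) ⊗ M_d(ℂ)`: transposition of the first factor. -/
def ptrans {n d : ℕ} (X : Matrix (Fin n × Fin d) (Fin n × Fin d) ℂ) :
    Matrix (Fin n × Fin d) (Fin n × Fin d) ℂ :=
  fun p q => X (q.1, p.2) (p.1, q.2)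

/-- The PPT cone `PPT_{n,d}`: positive semidefinite matrices with positive
semidefinite partial transpose. -/
def PPT (n d : ℕ) : Set (Matrix (Fin n × Fin d) (Fin n × Fin d) ℂ) :=
  {X | X.PosSemidef ∧ (ptrans X).PosSemidef}

/-- The semicircular distribution `SC_{m,σ}` with mean `m` and variance `σ²`:
density `√(4σ² − (x−m)²)/(2πσ²)` on `[m−2σ, m+2σ]`. -/
def SC (m σ : ℝ) : Measure ℝ :=
  MeasureTheory.volume.withDensity (fun x => ENNReal.ofReal
    (Set.indicator (Set.Icc (m - 2 * σ) (m + 2 * σ))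
      (fun y => Real.sqrt (4 * σ ^ 2 - (y - m) ^ 2) / (2 * Real.pi * σ ^ 2)) x))

/-!
For a sequence `Y` converging strongly to `SC m σ` put `Z = (Y - m) / σ`, so that `Z` is
asymptotically a standard semicircular matrix.

Spectra of two matrices which are both close to the semicircular distribution are uniformly close
after sorting. Since the law of `Z` is unitarily invariant, conjugating by a Haar unitary
independent of `Z` therefore couples `Z` with a GUE matrix up to a small error in operator norm,
and norm bounds for linear images of GUE matrices carry over to the same linear images of `Z`.

A GUE matrix is a Gaussian matrix `G = ∑ α, g α • E α` with `∑ α, E α ⊗ E α = N⁻¹ • swap`. Partial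
transposition preserves this condition, and so does the compression of `n × n` block matrices by a
unit vector of `ℂⁿ` multiplied by `√n`. Hence asymptotically the partial transpose of `Z` has norm
at most `2`, and all its compressions by unit vectors have norm at most `2 / √n` (for one vector at
a time, then uniformly by a finite net). Gaussian integration by parts turns the condition into a
recursion (Schwinger–Dyson equations) for the mixed moments of `tr G ^ k`, whose comparison with the
semicircular moments gives norm tails of order `N⁻²`, summable as Borel–Cantelli requires.

If `2 σ < m`, both `Y = m + σ Z` and its partial transpose are eventually positive semidefinite.
If `2 / √n < σ / m`, then `Z` witnesses entanglement: `tr (Z Y) → σ` for the normalized trace,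
whereas `tr (Z S) ≤ (2 / √n + o(1)) tr S` for separable `S`, and `tr Y → m`.
-/

section GaussianMoments

open ProbabilityTheory

open scoped NNReal

lemma integrable_pow_gaussianReal (μ : ℝ) (v : ℝ≥0) (k : ℕ) :
    Integrable (fun x : ℝ => x ^ k) (gaussianReal μ v) :=
  integrable_pow_of_integrable_exp_mul one_ne_zero (integrable_exp_mul_gaussianReal 1)
    (integrable_exp_mul_gaussianReal (-1)) k

lemma hasDerivAt_gaussianPDFReal {v : ℝ≥0} (hv : v ≠ 0) (x : ℝ) :
    HasDerivAt (gaussianPDFReal 0 v) (-(x / v) * gaussianPDFReal 0 v x) x := by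
  have hpdf : gaussianPDFReal 0 v =
      fun y => (√(2 * Real.pi * v))⁻¹ * Real.exp (-(y ^ 2) / (2 * v)) := by
    funext y
    simp [gaussianPDFReal]
  rw [hpdf]
  refine ((((hasDerivAt_id x).pow 2).neg.div_const (2 * (v : ℝ))).exp.const_mul
    (√(2 * Real.pi * v))⁻¹).congr_deriv ?_
  have : (v : ℝ) ≠ 0 := by exact_mod_cast hv
  simp only [id_eq, Pi.neg_apply, Pi.pow_apply]
  field_simp
  simp

lemma integrable_pow_mul_gaussianPDFReal {v : ℝ≥0} (hv : v ≠ 0) (k : ℕ) :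
    Integrable (fun x : ℝ => x ^ k * gaussianPDFReal 0 v x) := by
  have h := integrable_pow_gaussianReal 0 v k
  rw [gaussianReal_of_var_ne_zero _ hv, integrable_withDensity_iff (measurable_gaussianPDF _ _)
      (by simp [gaussianPDF])] at h
  simpa using h

lemma integral_pow_succ_gaussianReal {v : ℝ≥0} (hv : v ≠ 0) (k : ℕ) :
    ∫ x, x ^ (k + 1) ∂gaussianReal 0 v = v * (k * ∫ x, x ^ (k - 1) ∂gaussianReal 0 v) := by
  have hv' : (v : ℝ) ≠ 0 := by exact_mod_cast hv
  have hI := integrable_pow_mul_gaussianPDFReal hv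
  have hderiv (x : ℝ) : HasDerivAt (fun x : ℝ => x ^ k * gaussianPDFReal 0 v x)
      (k * (x ^ (k - 1) * gaussianPDFReal 0 v x)
        - (v : ℝ)⁻¹ * (x ^ (k + 1) * gaussianPDFReal 0 v x)) x :=
    ((hasDerivAt_pow k x).mul (hasDerivAt_gaussianPDFReal hv x)).congr_deriv (by ring)
  have hparts := integral_eq_zero_of_hasDerivAt_of_integrable hderiv
    (((hI (k - 1)).const_mul _).sub ((hI (k + 1)).const_mul _)) (hI k)
  rw [integral_sub ((hI (k - 1)).const_mul _) ((hI (k + 1)).const_mul _), integral_const_mul,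
    integral_const_mul, sub_eq_zero, eq_inv_mul_iff_mul_eq₀ hv'] at hparts
  simpa only [integral_gaussianReal_eq_integral_smul hv, smul_eq_mul,
    mul_comm (gaussianPDFReal 0 v _)] using hparts.symm

end GaussianMoments

section GaussianPolynomials

open ProbabilityTheory

variable {ι : Type*} [Fintype ι]

/-- The standard Gaussian measure on `ι → ℝ`, the law of a family of independent standard normal
variables. -/
def stdGaussianPi (ι : Type*) [Fintype ι] : Measure (ι → ℝ) :=
  Measure.pi fun _ => gaussianReal 0 1

instance isProbabilityMeasure_stdGaussianPi : IsProbabilityMeasure (stdGaussianPi ι) :=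
  inferInstanceAs (IsProbabilityMeasure (Measure.pi _))

/-- Evaluation of complex polynomials at a real point. -/
def realEval {ι : Type*} (g : ι → ℝ) : MvPolynomial ι ℂ →ₐ[ℂ] ℂ :=
  MvPolynomial.aeval fun i => (g i : ℂ)

lemma realEval_monomial (g : ι → ℝ) (s : ι →₀ ℕ) (c : ℂ) :
    realEval g (MvPolynomial.monomial s c) = c * ∏ i, ((g i ^ s i : ℝ) : ℂ) := by
  rw [realEval, MvPolynomial.aeval_monomial, Finsupp.prod_fintype _ _ (by simp)]
  simp

lemma integrable_realEval (p : MvPolynomial ι ℂ) :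
    Integrable (fun g => realEval g p) (stdGaussianPi ι) := by
  induction p using MvPolynomial.induction_on' with
  | monomial s c =>
    simp only [realEval_monomial]
    exact (Integrable.fintype_prod (f := fun i (x : ℝ) => ((x ^ s i : ℝ) : ℂ))
      fun i => (integrable_pow_gaussianReal 0 1 (s i)).ofReal).const_mul c
  | add p q hp hq =>
    simp only [map_add]
    exact hp.add hq

/-- The expectation of a polynomial in independent standard normal variables. -/
def gaussianExpectation : MvPolynomial ι ℂ →ₗ[ℂ] ℂ where
  toFun p := ∫ g, realEval g p ∂stdGaussianPi ι
  map_add' p q := by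
    simp only [map_add]
    exact integral_add (integrable_realEval p) (integrable_realEval q)
  map_smul' c p := by
    simp only [map_smul, RingHom.id_apply, integral_smul]

lemma gaussianExpectation_apply (p : MvPolynomial ι ℂ) :
    gaussianExpectation p = ∫ g, realEval g p ∂stdGaussianPi ι := rfl

lemma gaussianExpectation_one : gaussianExpectation (1 : MvPolynomial ι ℂ) = 1 := by
  simp [gaussianExpectation_apply]

lemma gaussianExpectation_monomial (s : ι →₀ ℕ) (c : ℂ) :
    gaussianExpectation (MvPolynomial.monomial s c) =
      c * ∏ i, ((∫ x, x ^ s i ∂gaussianReal 0 1 : ℝ) : ℂ) := by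
  simp only [gaussianExpectation_apply, realEval_monomial, integral_const_mul]
  rw [stdGaussianPi,
    integral_fintype_prod_eq_prod (𝕜 := ℂ) (f := fun i (x : ℝ) => ((x ^ s i : ℝ) : ℂ))]
  simp only [integral_complex_ofReal]

lemma gaussianExpectation_X_mul (i : ι) (p : MvPolynomial ι ℂ) :
    gaussianExpectation (MvPolynomial.X i * p) =
      gaussianExpectation (MvPolynomial.pderiv i p) := by
  classical
  induction p using MvPolynomial.induction_on' with
  | monomial s c =>
    have hne : ∀ j ∈ Finset.univ.erase i, (Finsupp.single i 1 + s : ι →₀ ℕ) j =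
        (s - Finsupp.single i 1 : ι →₀ ℕ) j := fun j hj => by
      simp [(Finset.ne_of_mem_erase hj).symm]
    rw [MvPolynomial.pderiv_monomial, MvPolynomial.X, MvPolynomial.monomial_mul,
      gaussianExpectation_monomial, gaussianExpectation_monomial,
      ← Finset.mul_prod_erase _ _ (Finset.mem_univ i),
      ← Finset.mul_prod_erase _ (fun j => ((∫ x, x ^ (s - Finsupp.single i 1 : ι →₀ ℕ) j
        ∂gaussianReal 0 1 : ℝ) : ℂ)) (Finset.mem_univ i),
      Finset.prod_congr rfl fun j hj => by rw [hne j hj]]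
    simp only [Finsupp.add_apply, Finsupp.single_eq_same, Finsupp.tsub_apply, add_comm 1 (s i),
      integral_pow_succ_gaussianReal one_ne_zero]
    push_cast
    ring
  | add p q hp hq => rw [mul_add, map_add, map_add, map_add, hp, hq]

end GaussianPolynomials

section Derivations

variable {R S : Type*} [CommSemiring R] [CommSemiring S] [Algebra R S] (D : Derivation R S S)

lemma derivation_multiset_prod_map {β : Type*} [DecidableEq β] (s : Multiset β) (f : β → S) :
    D (s.map f).prod = (s.map fun a => ((s.erase a).map f).prod * D (f a)).sum := by
  induction s using Multiset.induction with
  | empty => simp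
  | cons b s ih =>
    have herase : ∀ a ∈ s, (((b ::ₘ s).erase a).map f).prod * D (f a) =
        f b * (((s.erase a).map f).prod * D (f a)) := fun a ha => by
      rw [Multiset.erase_cons_tail_of_mem ha, Multiset.map_cons, Multiset.prod_cons, mul_assoc]
    rw [Multiset.map_cons, Multiset.prod_cons, D.leibniz, ih, Multiset.map_cons, Multiset.sum_cons,
      Multiset.erase_cons_head, Multiset.map_congr rfl herase, Multiset.sum_map_mul_left, add_comm,
      smul_eq_mul, smul_eq_mul]

lemma map_derivation_mul {l m n : Type*} [Fintype m] (A : Matrix l m S) (B : Matrix m n S) :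
    (A * B).map D = A.map D * B + A * B.map D := by
  ext i j
  simp only [map_apply, mul_apply, Matrix.add_apply, map_sum, D.leibniz, smul_eq_mul,
    ← Finset.sum_add_distrib]
  exact Finset.sum_congr rfl fun k _ => by ring

variable {N : Type*} [Fintype N] [DecidableEq N]

lemma map_derivation_pow (A : Matrix N N S) (k : ℕ) :
    (A ^ k).map D = ∑ j ∈ Finset.range k, A ^ j * A.map D * A ^ (k - 1 - j) := by
  induction k with
  | zero =>
    ext i j
    simp only [pow_zero, map_apply, one_apply, Finset.range_zero, Finset.sum_empty,
      Matrix.zero_apply]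
    split_ifs <;> simp
  | succ k ih =>
    have hexp : ∀ j ∈ Finset.range k, A ^ j * A.map D * A ^ (k - 1 - j) * A =
        A ^ j * A.map D * A ^ (k + 1 - 1 - j) := fun j hj => by
      have hj := Finset.mem_range.1 hj
      rw [Matrix.mul_assoc _ _ A, ← pow_succ, show k - 1 - j + 1 = k + 1 - 1 - j by omega]
    rw [pow_succ, map_derivation_mul, ih, Finset.sum_range_succ, Finset.sum_mul,
      Finset.sum_congr rfl hexp]
    simp

lemma derivation_trace_pow (A : Matrix N N S) (k : ℕ) :
    D (A ^ k).trace = k * (A.map D * A ^ (k - 1)).trace := by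
  have hcycle : ∀ j ∈ Finset.range k, (A ^ j * A.map D * A ^ (k - 1 - j)).trace =
      (A.map D * A ^ (k - 1)).trace := fun j hj => by
    have hj := Finset.mem_range.1 hj
    rw [trace_mul_cycle, ← pow_add, trace_mul_comm, show k - 1 - j + j = k - 1 by omega]
  rw [AddMonoidHom.map_trace, map_derivation_pow, trace_sum, Finset.sum_congr rfl hcycle]
  simp

end Derivations

section SwapCovariance

/-- The family `F` satisfies `∑ α, F α ⊗ F α = c • swap`, where `swap` is the flip operator of the
tensor square. For `c = 1 / card N` this is the covariance structure of the coefficients of a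
normalized GUE matrix. -/
def HasSwapCovariance {ι N S : Type*} [Fintype ι] [DecidableEq N] [CommSemiring S]
    (F : ι → Matrix N N S) (c : S) : Prop :=
  ∀ i j k l, ∑ α, F α i j * F α k l = if i = l ∧ j = k then c else 0

namespace HasSwapCovariance

variable {ι N S : Type*} [Fintype ι] [DecidableEq N] [CommSemiring S]
  {F : ι → Matrix N N S} {c : S}

lemma map {T : Type*} [CommSemiring T] (hF : HasSwapCovariance F c) (f : S →+* T) :
    HasSwapCovariance (fun α => (F α).map f) (f c) := fun i j k l => by
  simp only [map_apply, ← map_mul, ← map_sum, hF i j k l, apply_ite f, map_zero]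

lemma const_smul (hF : HasSwapCovariance F c) (r : S) :
    HasSwapCovariance (fun α => r • F α) (r ^ 2 * c) := fun i j k l => by
  simp only [Matrix.smul_apply, smul_eq_mul, mul_mul_mul_comm r, ← Finset.mul_sum, hF i j k l,
    mul_ite, mul_zero, sq]

variable [Fintype N]

lemma sum_mul_mul (hF : HasSwapCovariance F c) (A : Matrix N N S) :
    ∑ α, F α * A * F α = (c * A.trace) • 1 := by
  ext i l
  calc (∑ α, F α * A * F α) i l = ∑ k, ∑ j, A j k * ∑ α, F α i j * F α k l := by
        simp only [Matrix.sum_apply, mul_apply, Finset.sum_mul, Finset.mul_sum]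
        rw [Finset.sum_comm]
        refine Finset.sum_congr rfl fun k _ => Finset.sum_comm.trans ?_
        exact Finset.sum_congr rfl fun j _ => Finset.sum_congr rfl fun α _ => by ring
    _ = ((c * A.trace) • (1 : Matrix N N S)) i l := by
        simp only [hF i _ _ l]
        by_cases hil : i = l <;> simp [hil, Matrix.trace, Finset.mul_sum, mul_comm]

lemma of_sum_mul_mul (h : ∀ A, ∑ α, F α * A * F α = (c * A.trace) • 1) :
    HasSwapCovariance F c := fun i j k l => by
  have hsingle := congrFun (congrFun (h (single j k 1)) i) l
  simpa [Matrix.sum_apply, mul_apply, Matrix.trace, one_apply, single_apply, ite_and,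
    eq_comm] using hsingle

/-- The flip operator intertwines `P ⊗ P` and `Q ⊗ Q`. -/
lemma mul_mul {N' : Type*} [Finite N'] [DecidableEq N'] (hF : HasSwapCovariance F c)
    {P : Matrix N' N S} {Q : Matrix N N' S} (hPQ : P * Q = 1) :
    HasSwapCovariance (fun α => P * F α * Q) c := by
  have := Fintype.ofFinite N'
  refine of_sum_mul_mul fun A => ?_
  calc ∑ α, P * F α * Q * A * (P * F α * Q)
      = P * (∑ α, F α * (Q * A * P) * F α) * Q := by
        simp only [Matrix.mul_sum, Matrix.sum_mul, Matrix.mul_assoc]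
    _ = (c * A.trace) • 1 := by
        rw [hF.sum_mul_mul, trace_mul_cycle, hPQ, Matrix.one_mul, Matrix.mul_smul, Matrix.mul_one,
          Matrix.smul_mul, hPQ]

lemma sum_trace_smul (hF : HasSwapCovariance F c) (A : Matrix N N S) :
    ∑ α, (F α * A).trace • F α = c • A := by
  ext k l
  calc (∑ α, (F α * A).trace • F α) k l = ∑ i, ∑ j, A j i * ∑ α, F α i j * F α k l := by
        simp only [Matrix.sum_apply, Matrix.smul_apply, Matrix.trace, diag_apply, mul_apply,
          smul_eq_mul, Finset.sum_mul, Finset.mul_sum]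
        rw [Finset.sum_comm]
        refine Finset.sum_congr rfl fun i _ => Finset.sum_comm.trans ?_
        exact Finset.sum_congr rfl fun j _ => Finset.sum_congr rfl fun α _ => by ring
    _ = (c • A) k l := by
        simp only [hF _ _ k l]
        simp [ite_and, mul_comm]

end HasSwapCovariance

end SwapCovariance

section SchwingerDyson

variable {ι N : Type*} [Fintype ι] [Fintype N]

/-- A family `E` of Hermitian matrices for which `∑ α, g α • E α`, with `g α` independent standard
normal variables, is a GUE matrix normalized to have the semicircular limit of variance `1`. -/
structure IsGUEFamily [DecidableEq N] (E : ι → Matrix N N ℂ) : Prop where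
  isHermitian : ∀ α, (E α).IsHermitian
  covariance : HasSwapCovariance E (Fintype.card N : ℂ)⁻¹

/-- A complex matrix seen as a matrix of constant polynomials in the variables `ι`. -/
def constMatrix {N : Type*} (ι : Type*) (A : Matrix N N ℂ) : Matrix N N (MvPolynomial ι ℂ) :=
  A.map MvPolynomial.C

/-- The matrix `∑ α, X α • E α` of linear forms; a GUE matrix is its value at a Gaussian point. -/
def genericMatrix {N : Type*} (E : ι → Matrix N N ℂ) : Matrix N N (MvPolynomial ι ℂ) :=
  ∑ α, (MvPolynomial.X α : MvPolynomial ι ℂ) • constMatrix ι (E α)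

variable [DecidableEq N]

/-- The normalized trace of the `k`-th power of `genericMatrix E`. -/
def genericTrace (E : ι → Matrix N N ℂ) (k : ℕ) : MvPolynomial ι ℂ :=
  (Fintype.card N : ℂ)⁻¹ • (genericMatrix E ^ k).trace

/-- The product of the normalized traces of the powers of `genericMatrix E` with exponents
in `s`. -/
def genericTraceProd (E : ι → Matrix N N ℂ) (s : Multiset ℕ) : MvPolynomial ι ℂ :=
  (s.map (genericTrace E)).prod

/-- The vector field `∑ α, tr (E α * G ^ k) ∂_α` with `G = genericMatrix E`, acting on polynomials.
It is what Gaussian integration by parts leaves of a factor `tr (G ^ (k + 1))`. -/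
def tracePowField (E : ι → Matrix N N ℂ) (k : ℕ) :
    Derivation ℂ (MvPolynomial ι ℂ) (MvPolynomial ι ℂ) :=
  ∑ α, (constMatrix ι (E α) * genericMatrix E ^ k).trace • MvPolynomial.pderiv α

lemma map_pderiv_constMatrix {ι N : Type*} (α : ι) (A : Matrix N N ℂ) :
    (constMatrix ι A).map (MvPolynomial.pderiv α) = 0 := by
  ext i j
  simp [constMatrix]

lemma map_pderiv_genericMatrix {N : Type*} (E : ι → Matrix N N ℂ) (α : ι) :
    (genericMatrix E).map (MvPolynomial.pderiv α) = constMatrix ι (E α) := by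
  ext1 i j
  simp only [genericMatrix, map_apply, Matrix.sum_apply, Matrix.smul_apply, smul_eq_mul, map_sum,
    MvPolynomial.pderiv_mul, constMatrix, MvPolynomial.pderiv_C, mul_zero, add_zero]
  rw [Finset.sum_eq_single α (fun β _ hβ => by rw [MvPolynomial.pderiv_X_of_ne hβ, zero_mul])
    (by simp), MvPolynomial.pderiv_X_self, one_mul]

lemma pderiv_trace_genericMatrix_pow (E : ι → Matrix N N ℂ) (α : ι) (k : ℕ) :
    MvPolynomial.pderiv α (genericMatrix E ^ k).trace =
      k * (constMatrix ι (E α) * genericMatrix E ^ (k - 1)).trace := by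
  rw [derivation_trace_pow, map_pderiv_genericMatrix]

lemma trace_genericMatrix_pow_succ (E : ι → Matrix N N ℂ) (k : ℕ) :
    (genericMatrix E ^ (k + 1)).trace =
      ∑ α, MvPolynomial.X α * (constMatrix ι (E α) * genericMatrix E ^ k).trace := by
  rw [pow_succ', genericMatrix, Finset.sum_mul, trace_sum]
  simp [trace_smul]

lemma genericTrace_zero [Nonempty N] (E : ι → Matrix N N ℂ) : genericTrace E 0 = 1 := by
  have hcard : (Fintype.card N : ℂ) ≠ 0 := Nat.cast_ne_zero.2 Fintype.card_ne_zero
  rw [genericTrace, pow_zero, trace_one, MvPolynomial.smul_eq_C_mul, ← map_natCast MvPolynomial.C,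
    ← map_mul, inv_mul_cancel₀ hcard, map_one]

lemma genericTraceProd_cons (E : ι → Matrix N N ℂ) (a : ℕ) (s : Multiset ℕ) :
    genericTraceProd E (a ::ₘ s) = genericTrace E a * genericTraceProd E s := by
  simp [genericTraceProd]

lemma tracePowField_apply (E : ι → Matrix N N ℂ) (k : ℕ) (Q : MvPolynomial ι ℂ) :
    tracePowField E k Q =
      ∑ α, (constMatrix ι (E α) * genericMatrix E ^ k).trace * MvPolynomial.pderiv α Q := by
  rw [tracePowField, ← Derivation.coeFnAddMonoidHom_apply, map_sum, Finset.sum_apply]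
  rfl

namespace IsGUEFamily

variable {E : ι → Matrix N N ℂ}

lemma covariance_constMatrix (hE : IsGUEFamily E) :
    HasSwapCovariance (fun α => constMatrix ι (E α))
      (MvPolynomial.C (Fintype.card N : ℂ)⁻¹ : MvPolynomial ι ℂ) :=
  hE.covariance.map MvPolynomial.C

lemma sum_pderiv_trace_mul_pow (hE : IsGUEFamily E) (k : ℕ) :
    ∑ α, MvPolynomial.pderiv α (constMatrix ι (E α) * genericMatrix E ^ k).trace =
      (Fintype.card N : ℂ)⁻¹ • ∑ j ∈ Finset.range k,
        (genericMatrix E ^ j).trace * (genericMatrix E ^ (k - 1 - j)).trace := by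
  have hderiv (α : ι) :
      MvPolynomial.pderiv α (constMatrix ι (E α) * genericMatrix E ^ k).trace =
        ∑ j ∈ Finset.range k, (constMatrix ι (E α) * genericMatrix E ^ j * constMatrix ι (E α) *
          genericMatrix E ^ (k - 1 - j)).trace := by
    rw [AddMonoidHom.map_trace, map_derivation_mul, map_pderiv_constMatrix, zero_mul, zero_add,
      map_derivation_pow, map_pderiv_genericMatrix, Finset.mul_sum, trace_sum]
    simp only [Matrix.mul_assoc]
  simp only [hderiv]
  rw [Finset.sum_comm, Finset.smul_sum]
  refine Finset.sum_congr rfl fun j _ => ?_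
  rw [← trace_sum, ← Finset.sum_mul, hE.covariance_constMatrix.sum_mul_mul, Matrix.smul_mul,
    one_mul, trace_smul, MvPolynomial.smul_eq_C_mul, smul_eq_mul, mul_assoc]

lemma tracePowField_genericTrace (hE : IsGUEFamily E) (k a : ℕ) :
    tracePowField E k (genericTrace E a) =
      ((a : ℂ) / Fintype.card N) • genericTrace E (k + a - 1) := by
  rcases a with _ | a
  · simp [genericTrace]
  have hcov := congrArg (fun M => (M * genericMatrix E ^ a).trace)
    (hE.covariance_constMatrix.sum_trace_smul (genericMatrix E ^ k))
  simp only [Finset.sum_mul, trace_sum, Matrix.smul_mul, trace_smul, ← pow_add, smul_eq_mul]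
    at hcov
  rw [genericTrace, Derivation.map_smul, tracePowField_apply]
  simp only [pderiv_trace_genericMatrix_pow, Nat.add_sub_cancel,
    mul_left_comm _ ((a + 1 : ℕ) : MvPolynomial ι ℂ)]
  rw [← Finset.mul_sum, hcov, genericTrace, ← Nat.add_assoc, Nat.add_sub_cancel]
  simp only [MvPolynomial.smul_eq_C_mul, div_eq_mul_inv, map_mul, map_natCast]
  ring

lemma tracePowField_genericTraceProd (hE : IsGUEFamily E) (k : ℕ) (s : Multiset ℕ) :
    tracePowField E k (genericTraceProd E s) =
      (s.map fun a : ℕ => ((a : ℂ) / Fintype.card N) •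
        genericTraceProd E ((k + a - 1) ::ₘ s.erase a)).sum := by
  rw [genericTraceProd, derivation_multiset_prod_map]
  refine congrArg Multiset.sum (Multiset.map_congr rfl fun a _ => ?_)
  rw [hE.tracePowField_genericTrace, genericTraceProd_cons, mul_smul_comm, genericTraceProd,
    mul_comm]

lemma gaussianExpectation_trace_pow_succ_mul (hE : IsGUEFamily E) (k : ℕ) (Q : MvPolynomial ι ℂ) :
    gaussianExpectation ((genericMatrix E ^ (k + 1)).trace * Q) =
      gaussianExpectation (((Fintype.card N : ℂ)⁻¹ • ∑ j ∈ Finset.range k,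
        (genericMatrix E ^ j).trace * (genericMatrix E ^ (k - 1 - j)).trace) * Q) +
      gaussianExpectation (tracePowField E k Q) := by
  rw [trace_genericMatrix_pow_succ, Finset.sum_mul, map_sum]
  simp only [mul_assoc, gaussianExpectation_X_mul, MvPolynomial.pderiv_mul, map_add,
    Finset.sum_add_distrib]
  rw [← map_sum, ← map_sum, ← Finset.sum_mul, hE.sum_pderiv_trace_mul_pow, tracePowField_apply]

lemma schwinger_dyson (hE : IsGUEFamily E) (k : ℕ) (s : Multiset ℕ) :
    gaussianExpectation (genericTraceProd E ((k + 1) ::ₘ s)) =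
      ∑ j ∈ Finset.range k, gaussianExpectation (genericTraceProd E (j ::ₘ (k - 1 - j) ::ₘ s)) +
      (s.map fun a : ℕ => (a : ℂ) / (Fintype.card N : ℂ) ^ 2 *
        gaussianExpectation (genericTraceProd E ((k + a - 1) ::ₘ s.erase a))).sum := by
  rw [genericTraceProd_cons, genericTrace, smul_mul_assoc, map_smul,
    hE.gaussianExpectation_trace_pow_succ_mul, hE.tracePowField_genericTraceProd, smul_add,
    ← map_smul, ← map_smul, ← map_sum, Multiset.smul_sum, map_multiset_sum, Multiset.map_map,
    Multiset.map_map]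
  congr 2
  · simp only [genericTraceProd_cons, genericTrace, smul_mul_assoc, mul_smul_comm, Finset.smul_sum,
      Finset.sum_mul, mul_assoc]
  · refine Multiset.map_congr rfl fun a _ => ?_
    simp only [Function.comp_apply, map_smul, smul_eq_mul]
    ring

end IsGUEFamily

end SchwingerDyson

section TraceMoments

/-- The recursion determining the mixed moments `M {k₁, …, kₘ}` of the normalized traces of powers
of a GUE matrix of size `ν`. -/
structure IsTraceMoment (ν : ℕ) (M : Multiset ℕ → ℂ) : Prop where
  zero : M 0 = 1
  cons_zero : ∀ s, M (0 ::ₘ s) = M s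
  cons_succ : ∀ k s, M ((k + 1) ::ₘ s) =
    ∑ j ∈ Finset.range k, M (j ::ₘ (k - 1 - j) ::ₘ s) +
      (s.map fun a : ℕ => (a : ℂ) / (ν : ℂ) ^ 2 * M ((k + a - 1) ::ₘ s.erase a)).sum

lemma IsGUEFamily.isTraceMoment {ι N : Type*} [Fintype ι] [Fintype N] [DecidableEq N]
    [Nonempty N] {E : ι → Matrix N N ℂ} (hE : IsGUEFamily E) :
    IsTraceMoment (Fintype.card N) fun s => gaussianExpectation (genericTraceProd E s) where
  zero := by simp [genericTraceProd, gaussianExpectation_one]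
  cons_zero s := by simp [genericTraceProd_cons, genericTrace_zero]
  cons_succ := hE.schwinger_dyson

lemma traceMoment_induction {Q : Multiset ℕ → Prop} (zero : Q 0)
    (cons_zero : ∀ s, Q s → Q (0 ::ₘ s))
    (cons_succ : ∀ k s, (∀ j < k, Q (j ::ₘ (k - 1 - j) ::ₘ s)) →
      (∀ a ∈ s, a ≠ 0 → Q ((k + a - 1) ::ₘ s.erase a)) → Q ((k + 1) ::ₘ s))
    (s : Multiset ℕ) : Q s := by
  induction hn : s.sum using Nat.strong_induction_on generalizing s with
  | _ n ih =>
    induction s using Multiset.induction with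
    | empty => exact zero
    | cons a s ihs =>
      rw [Multiset.sum_cons] at hn
      rcases a with _ | k
      · exact cons_zero s (ihs (by omega))
      · refine cons_succ k s (fun j hj => ih _ ?_ _ rfl) fun a ha _ => ih _ ?_ _ rfl
        · simp only [Multiset.sum_cons]
          omega
        · have := Multiset.sum_erase ha
          simp only [Multiset.sum_cons]
          omega

lemma norm_sum_map_interaction_le (ν : ℕ) {s : Multiset ℕ} {w : ℕ → ℂ} {b : ℕ → ℝ}
    (h : ∀ a ∈ s, a ≠ 0 → ‖w a‖ ≤ b a) :
    ‖(s.map fun a : ℕ => (a : ℂ) / (ν : ℂ) ^ 2 * w a).sum‖ ≤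
      (s.map fun a : ℕ => (a : ℝ) * b a).sum / (ν : ℝ) ^ 2 := by
  refine (norm_multiset_sum_le _).trans ?_
  rw [Multiset.map_map, div_eq_mul_inv, ← Multiset.sum_map_mul_right]
  refine Multiset.sum_map_le_sum_map _ _ fun a ha => ?_
  rcases eq_or_ne a 0 with rfl | ha0
  · simp
  calc ‖(a : ℂ) / (ν : ℂ) ^ 2 * w a‖ = a * ‖w a‖ * ((ν : ℝ) ^ 2)⁻¹ := by
        rw [norm_mul, norm_div, norm_pow, Complex.norm_natCast, Complex.norm_natCast]
        ring
    _ ≤ a * b a * ((ν : ℝ) ^ 2)⁻¹ := by gcongr; exact h a ha ha0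

lemma sum_map_mul_prod_erase_le {s : Multiset ℕ} {f u : ℕ → ℝ} {b K : ℝ} (hf : ∀ a, 0 ≤ f a)
    (hb : 0 ≤ b) (hK : 0 < K) (hs : (s.sum : ℝ) ≤ K)
    (h : ∀ a ∈ s, a ≠ 0 → K * u a ≤ b * f a) :
    (s.map fun a : ℕ => (a : ℝ) * (u a * ((s.erase a).map f).prod)).sum ≤
      b * (s.map f).prod := by
  have hprod (t : Multiset ℕ) : 0 ≤ (t.map f).prod :=
    Multiset.prod_nonneg fun x hx => by
      obtain ⟨a, -, rfl⟩ := Multiset.mem_map.1 hx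
      exact hf a
  calc (s.map fun a : ℕ => (a : ℝ) * (u a * ((s.erase a).map f).prod)).sum
      ≤ (s.map fun a : ℕ => (a : ℝ) * (b * (s.map f).prod / K)).sum := by
        refine Multiset.sum_map_le_sum_map _ _ fun a ha => ?_
        rcases eq_or_ne a 0 with rfl | ha0
        · simp
        refine mul_le_mul_of_nonneg_left ?_ a.cast_nonneg
        rw [le_div_iff₀' hK, ← Multiset.prod_map_erase ha, ← mul_assoc, ← mul_assoc]
        exact mul_le_mul_of_nonneg_right (h a ha ha0) (hprod _)
    _ = s.sum * (b * (s.map f).prod / K) := by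
        rw [Multiset.sum_map_mul_right, Nat.cast_multiset_sum]
    _ ≤ K * (b * (s.map f).prod / K) :=
        mul_le_mul_of_nonneg_right hs (div_nonneg (mul_nonneg hb (hprod s)) hK.le)
    _ = b * (s.map f).prod := mul_div_cancel₀ _ hK.ne.symm

/-- A multiplicative supersolution `s ↦ ∏ f` of the recursion up to total degree `K` dominates
its solution. -/
lemma IsTraceMoment.norm_le_prod_map {ν : ℕ} {M : Multiset ℕ → ℂ} (hM : IsTraceMoment ν M)
    {f g : ℕ → ℝ} (hf0 : f 0 = 1) (hf : ∀ a, 0 ≤ f a) (hg : ∀ k, 0 ≤ g k)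
    (hfg : ∀ k, g k + ∑ j ∈ Finset.range k, f j * f (k - 1 - j) ≤ f (k + 1)) {K : ℕ}
    (hfK : ∀ k a, a ≠ 0 → k + 1 + a ≤ K → K * (f (k + a - 1) / (ν : ℝ) ^ 2) ≤ g k * f a)
    (s : Multiset ℕ) (hs : s.sum ≤ K) : ‖M s‖ ≤ (s.map f).prod := by
  induction s using traceMoment_induction with
  | zero => simp [hM.zero]
  | cons_zero s ih => simpa [hM.cons_zero, hf0] using ih (by simpa using hs)
  | cons_succ k s ih_split ih_merge =>
    rw [Multiset.sum_cons] at hs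
    have hprod : 0 ≤ (s.map f).prod := Multiset.prod_nonneg fun x hx => by
      obtain ⟨a, -, rfl⟩ := Multiset.mem_map.1 hx
      exact hf a
    have hsplit : ‖∑ j ∈ Finset.range k, M (j ::ₘ (k - 1 - j) ::ₘ s)‖ ≤
        (∑ j ∈ Finset.range k, f j * f (k - 1 - j)) * (s.map f).prod := by
      rw [Finset.sum_mul]
      refine norm_sum_le_of_le _ fun j hj => ?_
      have hj := Finset.mem_range.1 hj
      refine (ih_split j hj (by simp only [Multiset.sum_cons]; omega)).trans_eq ?_
      simp [mul_assoc]
    have hmerge : ‖(s.map fun a : ℕ => (a : ℂ) / (ν : ℂ) ^ 2 *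
        M ((k + a - 1) ::ₘ s.erase a)).sum‖ ≤ g k * (s.map f).prod := by
      have hle : ∀ a ∈ s, a ≠ 0 → a + (s.erase a).sum = s.sum := fun a ha _ =>
        Multiset.sum_erase ha
      refine (norm_sum_map_interaction_le ν fun a ha ha0 => ih_merge a ha ha0 (by
        have := hle a ha ha0
        simp only [Multiset.sum_cons]; omega)).trans ?_
      rw [div_eq_mul_inv, ← Multiset.sum_map_mul_right]
      refine le_of_eq_of_le ?_ (sum_map_mul_prod_erase_le (u := fun a => f (k + a - 1) / ν ^ 2) hf
        (hg k) (by exact_mod_cast (by omega : 0 < K)) (by exact_mod_cast (by omega : s.sum ≤ K))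
        fun a ha ha0 => hfK k a ha0 (by have := hle a ha ha0; omega))
      refine congrArg Multiset.sum (Multiset.map_congr rfl fun a _ => ?_)
      rw [Multiset.map_cons, Multiset.prod_cons]
      ring
    rw [hM.cons_succ, Multiset.map_cons, Multiset.prod_cons]
    calc _ ≤ _ := norm_add_le_of_le hsplit hmerge
      _ = (g k + ∑ j ∈ Finset.range k, f j * f (k - 1 - j)) * (s.map f).prod := by ring
      _ ≤ _ := mul_le_mul_of_nonneg_right (hfg k) hprod

/-- The moments of the standard semicircular distribution, except that the recursion for the moment
of order `k > 0` has the additional term `δ * 2 ^ k`, which for `δ > 0` leaves room for error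
terms. -/
def perturbedMoment (δ : ℝ) : ℕ → ℝ
  | 0 => 1
  | k + 1 => δ * 2 ^ (k + 1) + ∑ j : Fin k, perturbedMoment δ j * perturbedMoment δ (k - 1 - j)

lemma perturbedMoment_zero (δ : ℝ) : perturbedMoment δ 0 = 1 := by
  rw [perturbedMoment]

lemma perturbedMoment_succ (δ : ℝ) (k : ℕ) : perturbedMoment δ (k + 1) = δ * 2 ^ (k + 1) +
    ∑ j ∈ Finset.range k, perturbedMoment δ j * perturbedMoment δ (k - 1 - j) := by
  rw [perturbedMoment,
    Finset.sum_range fun j => perturbedMoment δ j * perturbedMoment δ (k - 1 - j)]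

lemma perturbedMoment_nonneg {δ : ℝ} (hδ : 0 ≤ δ) (k : ℕ) : 0 ≤ perturbedMoment δ k := by
  induction k using Nat.strong_induction_on with
  | _ k ih =>
    rcases k with _ | k
    · simp [perturbedMoment_zero]
    rw [perturbedMoment_succ]
    refine add_nonneg (by positivity) (Finset.sum_nonneg fun j hj => ?_)
    have := Finset.mem_range.1 hj
    exact mul_nonneg (ih _ (by omega)) (ih _ (by omega))

lemma le_perturbedMoment {δ : ℝ} (hδ : 0 ≤ δ) {k : ℕ} (hk : k ≠ 0) :
    δ * 2 ^ k ≤ perturbedMoment δ k := by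
  obtain ⟨k, rfl⟩ := Nat.exists_eq_succ_of_ne_zero hk
  rw [perturbedMoment_succ]
  exact le_add_of_nonneg_right (Finset.sum_nonneg fun j _ =>
    mul_nonneg (perturbedMoment_nonneg hδ _) (perturbedMoment_nonneg hδ _))

lemma sum_convolution_le {u : ℕ → ℝ} (hu : ∀ k, 0 ≤ u k) (n : ℕ) :
    ∑ k ∈ Finset.range n, ∑ j ∈ Finset.range k, u j * u (k - 1 - j) ≤
      (∑ k ∈ Finset.range n, u k) ^ 2 := by
  have hswap : ∑ k ∈ Finset.range n, ∑ j ∈ Finset.range k, u j * u (k - 1 - j) =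
      ∑ j ∈ Finset.range n, ∑ k ∈ Finset.Ico (j + 1) n, u j * u (k - 1 - j) := by
    refine Finset.sum_comm' fun k j => ?_
    simp only [Finset.mem_range, Finset.mem_Ico]
    omega
  rw [hswap, sq, Finset.sum_mul]
  refine Finset.sum_le_sum fun j _ => ?_
  rw [← Finset.mul_sum, Finset.sum_Ico_eq_sum_range]
  refine mul_le_mul_of_nonneg_left ?_ (hu j)
  calc ∑ i ∈ Finset.range (n - (j + 1)), u (j + 1 + i - 1 - j)
      = ∑ i ∈ Finset.range (n - (j + 1)), u i :=
        Finset.sum_congr rfl fun i _ => congrArg u (by omega)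
    _ ≤ ∑ i ∈ Finset.range n, u i := Finset.sum_le_sum_of_subset_of_nonneg
        (Finset.range_subset_range.2 (by omega)) fun i _ _ => hu i

/-- The partial sums of the generating function satisfy `S ≤ 1 + δ q / (1 - q) + (q / 2) ^ 2 S ^ 2`,
an inequality which preserves the bound `S ≤ 2`. -/
lemma sum_perturbedMoment_mul_pow_le {δ q : ℝ} (hδ : 0 ≤ δ) (hq0 : 0 ≤ q) (hq1 : q < 1)
    (hδq : δ * q ≤ (1 - q) * (1 - q ^ 2)) (n : ℕ) :
    ∑ k ∈ Finset.range n, perturbedMoment δ k * (q / 2) ^ k ≤ 2 := by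
  set u : ℕ → ℝ := fun k => perturbedMoment δ k * (q / 2) ^ k with hu
  have hu0 (k : ℕ) : 0 ≤ u k := mul_nonneg (perturbedMoment_nonneg hδ k) (by positivity)
  have hsucc (k : ℕ) : u (k + 1) =
      δ * q * q ^ k + (q / 2) ^ 2 * ∑ j ∈ Finset.range k, u j * u (k - 1 - j) := by
    simp only [hu]
    rw [perturbedMoment_succ, add_mul, Finset.sum_mul, Finset.mul_sum, div_pow q 2 (k + 1)]
    congr 1
    · field_simp
      ring
    · refine Finset.sum_congr rfl fun j hj => ?_
      have hk : k + 1 = j + (k - 1 - j) + 2 := by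
        have := Finset.mem_range.1 hj
        omega
      rw [← div_pow, hk, pow_add, pow_add]
      ring
  induction n with
  | zero => simp
  | succ n ih =>
    have hS0 : 0 ≤ ∑ k ∈ Finset.range n, u k := Finset.sum_nonneg fun k _ => hu0 k
    have hq2 : 0 ≤ (1 - q) * (1 - q ^ 2) := (mul_nonneg hδ hq0).trans hδq
    have hgeom : δ * q * ∑ k ∈ Finset.range n, q ^ k ≤ 1 - q ^ 2 := by
      have hsum : ∑ k ∈ Finset.range n, q ^ k ≤ (1 - q)⁻¹ := by
        rw [← tsum_geometric_of_lt_one hq0 hq1]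
        exact (summable_geometric_of_lt_one hq0 hq1).sum_le_tsum _ fun i _ => by positivity
      calc δ * q * ∑ k ∈ Finset.range n, q ^ k
          ≤ (1 - q) * (1 - q ^ 2) * (1 - q)⁻¹ := by gcongr
        _ = 1 - q ^ 2 := by rw [mul_comm, inv_mul_cancel_left₀ (sub_pos.2 hq1).ne']
    have hconv : (q / 2) ^ 2 * ∑ k ∈ Finset.range n, ∑ j ∈ Finset.range k, u j * u (k - 1 - j) ≤
        q ^ 2 := by
      calc _ ≤ (q / 2) ^ 2 * 2 ^ 2 := by gcongr; exact (sum_convolution_le hu0 n).trans (by gcongr)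
        _ = q ^ 2 := by ring
    have hzero : u 0 = 1 := by simp [hu, perturbedMoment_zero]
    change ∑ k ∈ Finset.range (n + 1), u k ≤ 2
    rw [Finset.sum_range_succ', hzero]
    simp only [hsucc]
    rw [Finset.sum_add_distrib, ← Finset.mul_sum, ← Finset.mul_sum]
    linarith

lemma perturbedMoment_le {r : ℝ} (hr : 1 < r) (k : ℕ) :
    perturbedMoment ((r - 1) * (1 - r⁻¹ ^ 2)) k ≤ 2 * (2 * r) ^ k := by
  have hr0 : 0 < r := one_pos.trans hr
  have hq0 : 0 < r⁻¹ := inv_pos.2 hr0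
  have hq1 : r⁻¹ < 1 := inv_lt_one_of_one_lt₀ hr
  have hδ : 0 ≤ (r - 1) * (1 - r⁻¹ ^ 2) :=
    mul_nonneg (sub_nonneg.2 hr.le) (sub_nonneg.2 (pow_le_one₀ hq0.le hq1.le))
  have hδq : (r - 1) * (1 - r⁻¹ ^ 2) * r⁻¹ ≤ (1 - r⁻¹) * (1 - r⁻¹ ^ 2) := by
    rw [mul_right_comm, sub_mul, mul_inv_cancel₀ hr0.ne', one_mul]
  have hterm : perturbedMoment ((r - 1) * (1 - r⁻¹ ^ 2)) k * (r⁻¹ / 2) ^ k ≤ 2 :=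
    (Finset.single_le_sum (fun i _ => mul_nonneg (perturbedMoment_nonneg hδ i) (by positivity))
      (Finset.self_mem_range_succ k)).trans
      (sum_perturbedMoment_mul_pow_le hδ hq0.le hq1 hδq (k + 1))
  rwa [inv_div_left, inv_pow (2 * r), mul_inv_le_iff₀ (by positivity)] at hterm

lemma IsTraceMoment.norm_singleton_le {ν : ℕ} {M : Multiset ℕ → ℂ} (hM : IsTraceMoment ν M)
    (hν : ν ≠ 0) {r : ℝ} (hr : 1 < r) {K : ℕ}
    (hK : 2 * K * r ^ K ≤ ((r - 1) * (1 - r⁻¹ ^ 2)) ^ 2 * ν ^ 2) :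
    ‖M {K}‖ ≤ 2 * (2 * r) ^ K := by
  set δ := (r - 1) * (1 - r⁻¹ ^ 2)
  have hδ : 0 ≤ δ := mul_nonneg (sub_nonneg.2 hr.le)
    (sub_nonneg.2 (pow_le_one₀ (by positivity) (inv_le_one_of_one_le₀ hr.le)))
  have hmerge (k a : ℕ) (ha : a ≠ 0) (hka : k + 1 + a ≤ K) :
      K * (perturbedMoment δ (k + a - 1) / (ν : ℝ) ^ 2) ≤
        δ * 2 ^ (k + 1) * perturbedMoment δ a := by
    have hpow : (2 * r) ^ (k + a - 1) ≤ 2 ^ (k + 1 + a) * r ^ K := by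
      rw [mul_pow]
      gcongr
      · norm_num
      · omega
      · exact hr.le
      · omega
    rw [mul_div_assoc', div_le_iff₀ (by positivity)]
    calc K * perturbedMoment δ (k + a - 1) ≤ K * (2 * (2 ^ (k + 1 + a) * r ^ K)) := by
          gcongr
          exact (perturbedMoment_le hr _).trans (by gcongr)
      _ = 2 * K * r ^ K * 2 ^ (k + 1 + a) := by ring
      _ ≤ δ ^ 2 * ν ^ 2 * 2 ^ (k + 1 + a) := by gcongr
      _ = δ * 2 ^ (k + 1) * (δ * 2 ^ a) * ν ^ 2 := by rw [pow_add _ (k + 1)]; ring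
      _ ≤ δ * 2 ^ (k + 1) * perturbedMoment δ a * ν ^ 2 := by
          gcongr
          exact le_perturbedMoment hδ ha
  have hbound := hM.norm_le_prod_map (g := fun k => δ * 2 ^ (k + 1)) (perturbedMoment_zero δ)
    (perturbedMoment_nonneg hδ) (fun k => by positivity) (fun k => (perturbedMoment_succ δ k).ge)
    hmerge {K} (by simp)
  rw [Multiset.map_singleton, Multiset.prod_singleton] at hbound
  exact hbound.trans (perturbedMoment_le hr K)

lemma eventually_exists_even_mul_pow_le {r c : ℝ} (hr : 1 < r) (hc : 0 < c) :
    ∀ᶠ ν : ℕ in atTop, ∃ p : ℕ,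
      ((2 * p : ℕ) : ℝ) * r ^ (2 * p) ≤ c * ν ^ 2 ∧ (ν : ℝ) ≤ r ^ (2 * (2 * p)) := by
  have hr1 : 0 < r - 1 := sub_pos.2 hr
  filter_upwards [eventually_ge_atTop 1,
    tendsto_natCast_atTop_atTop.eventually_ge_atTop (r ^ 4 / (r - 1) / c)] with ν hν1 hν
  have hν1' : (1 : ℝ) ≤ ν := by exact_mod_cast hν1
  obtain ⟨n, hn_le, hn_lt⟩ := exists_nat_pow_near hν1' (one_lt_pow₀ hr (by norm_num : 4 ≠ 0))
  have hpow : r ^ (2 * (2 * (n + 1))) = (r ^ 4) ^ (n + 1) := by rw [← pow_mul]; congr 1; ring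
  refine ⟨n + 1, ?_, hpow ▸ hn_lt.le⟩
  set K := 2 * (n + 1)
  have hbernoulli : (K : ℝ) ≤ r ^ K / (r - 1) := by
    rw [le_div_iff₀ hr1]
    linarith [one_add_mul_sub_le_pow (by linarith : -1 ≤ r) K]
  calc (K : ℝ) * r ^ K ≤ r ^ K / (r - 1) * r ^ K := by gcongr
    _ = r ^ (2 * K) / (r - 1) := by rw [two_mul, pow_add]; ring
    _ = r ^ 4 * (r ^ 4) ^ n / (r - 1) := by rw [hpow, pow_succ']
    _ ≤ r ^ 4 * ν / (r - 1) := by gcongr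
    _ = r ^ 4 / (r - 1) / c * (c * ν) := by field_simp
    _ ≤ ν * (c * ν) := by gcongr
    _ = c * ν ^ 2 := by ring

lemma eventually_exists_traceMoment_le {R : ℝ} (hR : 2 < R) :
    ∀ᶠ ν : ℕ in atTop, ∃ p : ℕ, ∀ M, IsTraceMoment ν M →
      ν * ‖M {2 * p}‖ ≤ 2 / (ν : ℝ) ^ 2 * R ^ (2 * p) := by
  obtain ⟨r, hr, hr7⟩ : ∃ r : ℝ, 1 < r ∧ r ^ 7 = R / 2 :=
    ⟨(R / 2) ^ ((7 : ℕ) : ℝ)⁻¹, Real.one_lt_rpow (by linarith) (by positivity),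
      Real.rpow_inv_natCast_pow (by linarith) (by norm_num)⟩
  have hδ : 0 < (r - 1) * (1 - r⁻¹ ^ 2) := mul_pos (sub_pos.2 hr)
    (sub_pos.2 (pow_lt_one₀ (by positivity) (inv_lt_one_of_one_lt₀ hr) two_ne_zero))
  filter_upwards [eventually_ne_atTop 0, eventually_exists_even_mul_pow_le hr
    (by positivity : 0 < ((r - 1) * (1 - r⁻¹ ^ 2)) ^ 2 / 2)] with ν hν ⟨p, hp, hνp⟩
  refine ⟨p, fun M hM => ?_⟩
  set K := 2 * p
  have hM_le := hM.norm_singleton_le hν hr (K := K) (by linarith)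
  rw [div_mul_eq_mul_div, le_div_iff₀ (by positivity)]
  calc ν * ‖M {K}‖ * (ν : ℝ) ^ 2 ≤ ν * (2 * (2 * r) ^ K) * (ν : ℝ) ^ 2 := by gcongr
    _ = 2 * 2 ^ K * ((ν : ℝ) ^ 3 * r ^ K) := by rw [mul_pow]; ring
    _ ≤ 2 * 2 ^ K * ((r ^ (2 * K)) ^ 3 * r ^ K) := by gcongr
    _ = 2 * (2 ^ K * (r ^ 7) ^ K) := by ring
    _ = 2 * R ^ K := by rw [hr7, ← mul_pow]; congr 2; ring

/-- The moments of the standard semicircular distribution. -/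
def semicircleMoment : ℕ → ℝ := perturbedMoment 0

lemma semicircleMoment_zero : semicircleMoment 0 = 1 := perturbedMoment_zero 0

lemma semicircleMoment_succ (k : ℕ) : semicircleMoment (k + 1) =
    ∑ j ∈ Finset.range k, semicircleMoment j * semicircleMoment (k - 1 - j) := by
  rw [semicircleMoment, perturbedMoment_succ, zero_mul, zero_add]

lemma exists_norm_traceMoment_sub_le (s : Multiset ℕ) : ∃ C : ℝ, ∀ ν : ℕ, ν ≠ 0 → ∀ M,
    IsTraceMoment ν M →
      ‖M s - ((s.map semicircleMoment).prod : ℝ)‖ ≤ C / (ν : ℝ) ^ 2 := by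
  induction s using traceMoment_induction with
  | zero => exact ⟨0, fun ν _ M hM => by simp [hM.zero]⟩
  | cons_zero s ih =>
    obtain ⟨C, hC⟩ := ih
    exact ⟨C, fun ν hν M hM => by simpa [hM.cons_zero, semicircleMoment_zero] using hC ν hν M hM⟩
  | cons_succ k s ih_split ih_merge =>
    choose! C hC using ih_split
    choose! D hD using ih_merge
    set c : Multiset ℕ → ℝ := fun t => (t.map semicircleMoment).prod with hc
    refine ⟨∑ j ∈ Finset.range k, C j +
      (s.map fun a : ℕ => a * (D a + |c ((k + a - 1) ::ₘ s.erase a)|)).sum, fun ν hν M hM => ?_⟩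
    have hfactor : c ((k + 1) ::ₘ s) = ∑ j ∈ Finset.range k, c (j ::ₘ (k - 1 - j) ::ₘ s) := by
      simp only [hc, Multiset.map_cons, Multiset.prod_cons, semicircleMoment_succ, Finset.sum_mul,
        mul_assoc]
    have hmerge (a : ℕ) (ha : a ∈ s) (ha0 : a ≠ 0) :
        ‖M ((k + a - 1) ::ₘ s.erase a)‖ ≤ D a + |c ((k + a - 1) ::ₘ s.erase a)| := by
      have hν2 : (1 : ℝ) ≤ (ν : ℝ) ^ 2 :=
        one_le_pow₀ (by exact_mod_cast Nat.one_le_iff_ne_zero.2 hν)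
      have hdist := hD a ha ha0 ν hν M hM
      have hD0 : 0 ≤ D a := by
        simpa only [zero_mul] using
          (le_div_iff₀ (by positivity)).1 ((norm_nonneg _).trans hdist)
      replace hdist := hdist.trans (div_le_self hD0 hν2)
      refine (norm_le_norm_sub_add _ _).trans (add_le_add hdist ?_)
      rw [Complex.norm_real, Real.norm_eq_abs]
    change ‖_ - ((c ((k + 1) ::ₘ s) : ℝ) : ℂ)‖ ≤ _
    rw [hM.cons_succ, hfactor, Complex.ofReal_sum, add_sub_right_comm, ← Finset.sum_sub_distrib,
      add_div, Finset.sum_div]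
    exact norm_add_le_of_le
      (norm_sum_le_of_le _ fun j hj => hC j (Finset.mem_range.1 hj) ν hν M hM)
      (norm_sum_map_interaction_le ν hmerge)

end TraceMoments

section HermitianSpectrum

open scoped Matrix.Norms.L2Operator

variable {N : Type*} [Fintype N]

/-- The real part of the trace, normalized to take the value `1` at the identity matrix. -/
def normalizedTrace (X : Matrix N N ℂ) : ℝ := X.trace.re / Fintype.card N

lemma normalizedTrace_add (A B : Matrix N N ℂ) :
    normalizedTrace (A + B) = normalizedTrace A + normalizedTrace B := by
  simp [normalizedTrace, add_div]

lemma normalizedTrace_ofReal_smul (c : ℝ) (A : Matrix N N ℂ) :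
    normalizedTrace ((c : ℂ) • A) = c * normalizedTrace A := by
  simp [normalizedTrace, mul_div_assoc]

variable [DecidableEq N]

lemma trace_conjStarAlgAut (U : unitary (Matrix N N ℂ)) (A : Matrix N N ℂ) :
    (Unitary.conjStarAlgAut ℂ _ U A).trace = A.trace := by
  rw [Unitary.conjStarAlgAut_apply, trace_mul_cycle, Unitary.coe_star_mul_self, Matrix.one_mul]

variable {A : Matrix N N ℂ}

lemma trace_pow_of_isHermitian (hA : A.IsHermitian) (k : ℕ) :
    (A ^ k).trace = ((∑ i, hA.eigenvalues i ^ k : ℝ) : ℂ) := by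
  conv_lhs => rw [hA.spectral_theorem]
  rw [← map_pow, trace_conjStarAlgAut, diagonal_pow, trace_diagonal]
  simp

lemma normalizedTrace_pow_of_isHermitian (hA : A.IsHermitian) (k : ℕ) :
    normalizedTrace (A ^ k) = (∑ i, hA.eigenvalues i ^ k) / Fintype.card N := by
  rw [normalizedTrace, trace_pow_of_isHermitian hA, Complex.ofReal_re]

lemma norm_eq_norm_eigenvalues (hA : A.IsHermitian) : ‖A‖ = ‖hA.eigenvalues‖ := by
  conv_lhs => rw [hA.spectral_theorem]
  rw [StarAlgEquiv.norm_map, l2_opNorm_diagonal]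
  simp [Pi.norm_def]

lemma norm_pow_le_card_mul_normalizedTrace [Nonempty N] (hA : A.IsHermitian) (p : ℕ) :
    ‖A‖ ^ (2 * p) ≤ Fintype.card N * normalizedTrace (A ^ (2 * p)) := by
  rw [normalizedTrace_pow_of_isHermitian hA,
    mul_div_cancel₀ _ (Nat.cast_ne_zero.2 Fintype.card_ne_zero), norm_eq_norm_eigenvalues hA]
  obtain ⟨i, hi⟩ := Finite.exists_max fun i => ‖hA.eigenvalues i‖
  rw [le_antisymm ((pi_norm_le_iff_of_nonneg (norm_nonneg _)).2 hi) (norm_le_pi_norm _ i),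
    Real.norm_eq_abs, pow_mul, sq_abs, ← pow_mul]
  exact Finset.single_le_sum (f := fun i => hA.eigenvalues i ^ (2 * p))
    (fun i _ => (even_two_mul p).pow_nonneg _) (Finset.mem_univ i)

end HermitianSpectrum

section GUEConcentration

open scoped Matrix.Norms.L2Operator

universe u v

/-- The matrix `∑ α, g α • E α`: for a GUE family `E` and a standard Gaussian vector `g` this is
a normalized GUE matrix. -/
def gaussianMatrix {ι N : Type*} [Fintype ι] (E : ι → Matrix N N ℂ) (g : ι → ℝ) : Matrix N N ℂ :=
  ∑ α, (g α : ℂ) • E α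

lemma continuous_gaussianMatrix {ι N : Type*} [Fintype ι] (E : ι → Matrix N N ℂ) :
    Continuous (gaussianMatrix E) := by
  unfold gaussianMatrix
  fun_prop

lemma genericMatrix_map_realEval {ι N : Type*} [Fintype ι] (E : ι → Matrix N N ℂ) (g : ι → ℝ) :
    (genericMatrix E).map (realEval g) = gaussianMatrix E g := by
  ext i j
  simp [genericMatrix, gaussianMatrix, constMatrix, realEval, Matrix.sum_apply]

namespace IsGUEFamily

variable {ι N : Type*} [Fintype ι] [Fintype N] [DecidableEq N] {E : ι → Matrix N N ℂ}

lemma isHermitian_gaussianMatrix (hE : IsGUEFamily E) (g : ι → ℝ) :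
    (gaussianMatrix E g).IsHermitian :=
  isSelfAdjoint_sum _ fun α _ => .smul (Complex.conj_ofReal _) (hE.isHermitian α)

lemma realEval_genericTrace (hE : IsGUEFamily E) (g : ι → ℝ) (k : ℕ) :
    realEval g (genericTrace E k) = (normalizedTrace (gaussianMatrix E g ^ k) : ℂ) := by
  have htrace : realEval g (genericMatrix E ^ k).trace = (gaussianMatrix E g ^ k).trace := by
    rw [AddMonoidHom.map_trace, ← genericMatrix_map_realEval, ← AlgHom.mapMatrix_apply, map_pow]
    rfl
  rw [genericTrace, map_smul, htrace, normalizedTrace,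
    trace_pow_of_isHermitian (hE.isHermitian_gaussianMatrix g), Complex.ofReal_re]
  push_cast
  rw [smul_eq_mul, inv_mul_eq_div]

lemma realEval_genericTraceProd (hE : IsGUEFamily E) (g : ι → ℝ) (s : Multiset ℕ) :
    realEval g (genericTraceProd E s) =
      ((s.map fun k : ℕ => normalizedTrace (gaussianMatrix E g ^ k)).prod : ℝ) := by
  rw [genericTraceProd, map_multiset_prod, Multiset.map_map, ← Complex.ofRealHom_eq_coe,
    map_multiset_prod, Multiset.map_map]
  simp only [Function.comp_def, hE.realEval_genericTrace, Complex.ofRealHom_eq_coe]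

lemma integrable_prod_normalizedTrace (hE : IsGUEFamily E) (s : Multiset ℕ) :
    Integrable (fun g => (s.map fun k : ℕ => normalizedTrace (gaussianMatrix E g ^ k)).prod)
      (stdGaussianPi ι) := by
  have hre := (integrable_realEval (genericTraceProd E s)).re
  simpa only [hE.realEval_genericTraceProd, RCLike.re_to_complex, Complex.ofReal_re] using hre

lemma gaussianExpectation_genericTraceProd (hE : IsGUEFamily E) (s : Multiset ℕ) :
    gaussianExpectation (genericTraceProd E s) =
      ((∫ g, (s.map fun k : ℕ => normalizedTrace (gaussianMatrix E g ^ k)).prod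
        ∂stdGaussianPi ι : ℝ) : ℂ) := by
  rw [gaussianExpectation_apply, ← integral_complex_ofReal]
  simp only [hE.realEval_genericTraceProd]

lemma pow_mul_measureReal_le_norm_le [Nonempty N] (hE : IsGUEFamily E) {R : ℝ} (hR : 0 ≤ R)
    (p : ℕ) : R ^ (2 * p) * (stdGaussianPi ι).real {g | R ≤ ‖gaussianMatrix E g‖} ≤
      Fintype.card N * ‖gaussianExpectation (genericTraceProd E {2 * p})‖ := by
  have hnorm (g : ι → ℝ) : ‖gaussianMatrix E g‖ ^ (2 * p) ≤
      Fintype.card N * normalizedTrace (gaussianMatrix E g ^ (2 * p)) :=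
    norm_pow_le_card_mul_normalizedTrace (hE.isHermitian_gaussianMatrix g) p
  have hinteg := hE.integrable_prod_normalizedTrace {2 * p}
  simp only [Multiset.map_singleton, Multiset.prod_singleton] at hinteg
  calc _ ≤ R ^ (2 * p) * (stdGaussianPi ι).real {g | R ^ (2 * p) ≤
          Fintype.card N * normalizedTrace (gaussianMatrix E g ^ (2 * p))} := by
        refine mul_le_mul_of_nonneg_left (measureReal_mono fun g hg => ?_) (by positivity)
        exact (pow_le_pow_left₀ hR hg (2 * p)).trans (hnorm g)
    _ ≤ ∫ g, Fintype.card N * normalizedTrace (gaussianMatrix E g ^ (2 * p)) ∂stdGaussianPi ι :=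
        mul_meas_ge_le_integral_of_nonneg
          (.of_forall fun g => (pow_nonneg (norm_nonneg _) _).trans (hnorm g))
          (hinteg.const_mul _) _
    _ ≤ _ := by
        rw [integral_const_mul, hE.gaussianExpectation_genericTraceProd, Complex.norm_real]
        simp only [Multiset.map_singleton, Multiset.prod_singleton]
        gcongr
        exact Real.le_norm_self _

end IsGUEFamily

lemma exists_measureReal_le_norm_gaussianMatrix_le {R : ℝ} (hR : 2 < R) :
    ∃ C : ℝ, ∀ (ι : Type u) (N : Type v) [Fintype ι] [Fintype N] [DecidableEq N] [Nonempty N]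
      (E : ι → Matrix N N ℂ), IsGUEFamily E →
      (stdGaussianPi ι).real {g | R ≤ ‖gaussianMatrix E g‖} ≤ C / (Fintype.card N : ℝ) ^ 2 := by
  have hR0 : 0 < R := two_pos.trans hR
  obtain ⟨ν₀, hν₀⟩ := eventually_atTop.1 (eventually_exists_traceMoment_le hR)
  refine ⟨max 2 ((ν₀ : ℝ) ^ 2), fun ι N _ _ _ _ E hE => ?_⟩
  rcases le_total ν₀ (Fintype.card N) with hν | hν
  · obtain ⟨p, hp⟩ := hν₀ _ hν
    have hmarkov := (hE.pow_mul_measureReal_le_norm_le hR0.le p).trans (hp _ hE.isTraceMoment)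
    rw [mul_comm] at hmarkov
    exact (le_of_mul_le_mul_right hmarkov (by positivity)).trans (by gcongr; exact le_max_left _ _)
  · refine measureReal_le_one.trans ?_
    rw [one_le_div₀ (by simp [Fintype.card_pos])]
    refine le_trans ?_ (le_max_right _ _)
    gcongr

lemma sq_mul_measureReal_le_abs_sub_le {Ω : Type*} [MeasurableSpace Ω] {μ : Measure Ω}
    [IsProbabilityMeasure μ] {T : Ω → ℝ} (hT : Integrable T μ)
    (hTT : Integrable (fun ω => T ω * T ω) μ) (s : ℝ) {η : ℝ} (hη : 0 ≤ η) :
    η ^ 2 * μ.real {ω | η ≤ |T ω - s|} ≤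
      (∫ ω, T ω * T ω ∂μ - s * s) - 2 * s * (∫ ω, T ω ∂μ - s) := by
  have hexpand : (fun ω => (T ω - s) ^ 2) = fun ω => T ω * T ω - 2 * s * T ω + s ^ 2 := by
    funext ω
    ring
  have hdiff : Integrable (fun ω => T ω * T ω - 2 * s * T ω) μ := hTT.sub (hT.const_mul _)
  calc η ^ 2 * μ.real {ω | η ≤ |T ω - s|} = η ^ 2 * μ.real {ω | η ^ 2 ≤ (T ω - s) ^ 2} := by
        simp only [sq_le_sq, abs_of_nonneg hη]
    _ ≤ ∫ ω, (T ω - s) ^ 2 ∂μ :=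
        mul_meas_ge_le_integral_of_nonneg (.of_forall fun ω => sq_nonneg (T ω - s))
          (hexpand ▸ hdiff.add (integrable_const _)) _
    _ = _ := by
        rw [hexpand, integral_add hdiff (integrable_const _),
          integral_sub hTT (hT.const_mul _), integral_const_mul, integral_const, probReal_univ,
          one_smul]
        ring

lemma exists_measureReal_le_abs_normalizedTrace_sub_le (k : ℕ) {η : ℝ} (hη : 0 < η) :
    ∃ C : ℝ, ∀ (ι : Type u) (N : Type v) [Fintype ι] [Fintype N] [DecidableEq N] [Nonempty N]
      (E : ι → Matrix N N ℂ), IsGUEFamily E →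
      (stdGaussianPi ι).real
          {g | η ≤ |normalizedTrace (gaussianMatrix E g ^ k) - semicircleMoment k|} ≤
        C / (Fintype.card N : ℝ) ^ 2 := by
  obtain ⟨C₁, hC₁⟩ := exists_norm_traceMoment_sub_le {k}
  obtain ⟨C₂, hC₂⟩ := exists_norm_traceMoment_sub_le {k, k}
  set s := semicircleMoment k with hs
  refine ⟨(C₂ + 2 * |s| * C₁) / η ^ 2, fun ι N _ _ _ _ E hE => ?_⟩
  have hmean := hC₁ _ Fintype.card_ne_zero _ hE.isTraceMoment
  have hsecond := hC₂ _ Fintype.card_ne_zero _ hE.isTraceMoment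
  have hinteg := hE.integrable_prod_normalizedTrace {k}
  have hinteg₂ := hE.integrable_prod_normalizedTrace {k, k}
  simp only [hE.gaussianExpectation_genericTraceProd, Multiset.insert_eq_cons, Multiset.map_cons,
    Multiset.prod_cons, Multiset.map_singleton, Multiset.prod_singleton, ← Complex.ofReal_sub,
    Complex.norm_real, ← hs] at hmean hsecond hinteg hinteg₂
  rw [div_div, mul_comm (η ^ 2), ← div_div, le_div_iff₀ (by positivity), mul_comm]
  refine (sq_mul_measureReal_le_abs_sub_le hinteg hinteg₂ s hη.le).trans ?_
  rw [add_div, mul_div_assoc]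
  refine (Real.le_norm_self _).trans (norm_sub_le_of_le hsecond ?_)
  rw [norm_mul, norm_mul, Real.norm_ofNat, Real.norm_eq_abs s]
  gcongr

end GUEConcentration

section Slices

open scoped Matrix.Norms.L2Operator

lemma norm_le_one_of_conjTranspose_mul_self_eq_one {N N' : Type*} [Fintype N] [Fintype N']
    [DecidableEq N'] {A : Matrix N N' ℂ} (hA : Aᴴ * A = 1) : ‖A‖ ≤ 1 := by
  have hsq : ‖A‖ * ‖A‖ = ‖(fun _ => 1 : N' → ℂ)‖ := by
    rw [← l2_opNorm_conjTranspose_mul_self, hA, ← diagonal_one, l2_opNorm_diagonal]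
  have hone : ‖(fun _ => 1 : N' → ℂ)‖ ≤ 1 := (pi_norm_le_iff_of_nonneg zero_le_one).2 (by simp)
  nlinarith [norm_nonneg A]

variable {M D : Type*}

/-- The matrix of the operator `b ↦ a ⊗ b`. -/
def tensorLeft (D : Type*) [DecidableEq D] (a : EuclideanSpace ℂ M) : Matrix (M × D) D ℂ :=
  fun p l => if p.2 = l then a p.1 else 0

variable [DecidableEq D]

lemma tensorLeft_sub (a b : EuclideanSpace ℂ M) :
    tensorLeft D (a - b) = tensorLeft D a - tensorLeft D b := by
  ext p l
  simp only [tensorLeft, Matrix.sub_apply, PiLp.sub_apply]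
  split_ifs <;> simp

lemma tensorLeft_smul (c : ℂ) (a : EuclideanSpace ℂ M) :
    tensorLeft D (c • a) = c • tensorLeft D a := by
  ext p l
  simp [tensorLeft]

variable [Fintype D]

lemma tensorLeft_mul_mul_conjTranspose (a b : EuclideanSpace ℂ M) (B : Matrix D D ℂ) :
    tensorLeft D a * B * (tensorLeft D b)ᴴ =
      vecMulVec (WithLp.ofLp a) (star (WithLp.ofLp b)) ⊗ₖ B := by
  ext p q
  simp only [Matrix.mul_apply, conjTranspose_apply, tensorLeft, kroneckerMap_apply, vecMulVec_apply,
    ite_mul, zero_mul, Finset.sum_ite_eq, Finset.mem_univ, if_true, Pi.star_apply]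
  simp [apply_ite, mul_right_comm]

variable [Fintype M]

lemma conjTranspose_tensorLeft_mul_self (a : EuclideanSpace ℂ M) :
    (tensorLeft D a)ᴴ * tensorLeft D a = ((‖a‖ ^ 2 : ℝ) : ℂ) • 1 := by
  ext i j
  simp only [Matrix.mul_apply, conjTranspose_apply, tensorLeft, Fintype.sum_prod_type,
    Matrix.smul_apply, Matrix.one_apply, EuclideanSpace.norm_sq_eq]
  by_cases h : i = j
  · subst h
    simp [Complex.conj_mul']
  · simp [h, Ne.symm h]

lemma norm_tensorLeft_le (a : EuclideanSpace ℂ M) : ‖tensorLeft D a‖ ≤ ‖a‖ := by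
  refine le_of_sq_le_sq ?_ (norm_nonneg a)
  calc ‖tensorLeft D a‖ ^ 2 = ‖a‖ ^ 2 * ‖(1 : Matrix D D ℂ)‖ := by
        rw [sq, ← l2_opNorm_conjTranspose_mul_self, conjTranspose_tensorLeft_mul_self, norm_smul,
          Complex.norm_real, Real.norm_of_nonneg (sq_nonneg _)]
    _ ≤ ‖a‖ ^ 2 := mul_le_of_le_one_right (sq_nonneg _)
        (norm_le_one_of_conjTranspose_mul_self_eq_one (by simp))

/-- The compression `(a* ⊗ 1) X (a ⊗ 1)` of a block matrix by a vector of the first tensor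
factor. -/
def slice (a : EuclideanSpace ℂ M) (X : Matrix (M × D) (M × D) ℂ) : Matrix D D ℂ :=
  (tensorLeft D a)ᴴ * X * tensorLeft D a

lemma isHermitian_slice {X : Matrix (M × D) (M × D) ℂ} (hX : X.IsHermitian)
    (a : EuclideanSpace ℂ M) : (slice a X).IsHermitian :=
  isHermitian_conjTranspose_mul_mul _ hX

lemma slice_smul (c : ℂ) (a : EuclideanSpace ℂ M) (X : Matrix (M × D) (M × D) ℂ) :
    slice (c • a) X = ((‖c‖ ^ 2 : ℝ) : ℂ) • slice a X := by
  simp only [slice, tensorLeft_smul, conjTranspose_smul, Matrix.smul_mul, Matrix.mul_smul,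
    smul_smul, Complex.star_def, Complex.mul_conj', Complex.ofReal_pow]

lemma norm_slice_le_mul_norm_sq {X : Matrix (M × D) (M × D) ℂ} {c : ℝ}
    (hc : ∀ a : EuclideanSpace ℂ M, ‖a‖ = 1 → ‖slice a X‖ ≤ c) (a : EuclideanSpace ℂ M) :
    ‖slice a X‖ ≤ c * ‖a‖ ^ 2 := by
  rcases eq_or_ne a 0 with rfl | ha
  · simp [slice, show tensorLeft D (0 : EuclideanSpace ℂ M) = 0 by ext; simp [tensorLeft]]
  · have ha' : (‖a‖ : ℂ) ≠ 0 := Complex.ofReal_ne_zero.2 (norm_ne_zero_iff.2 ha)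
    calc ‖slice a X‖ = ‖slice ((‖a‖ : ℂ) • (‖a‖ : ℂ)⁻¹ • a) X‖ := by
          rw [smul_inv_smul₀ ha']
      _ = ‖a‖ ^ 2 * ‖slice ((‖a‖ : ℂ)⁻¹ • a) X‖ := by
          rw [slice_smul, norm_smul, Complex.norm_real, Complex.norm_real, norm_norm, norm_pow,
            norm_norm]
      _ ≤ c * ‖a‖ ^ 2 := by
          rw [mul_comm]
          gcongr
          refine hc _ ?_
          rw [norm_smul, norm_inv, Complex.norm_real, norm_norm,
            inv_mul_cancel₀ (norm_ne_zero_iff.2 ha)]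

variable [DecidableEq M]

lemma norm_conjTranspose_tensorLeft_mul_mul_le (a b : EuclideanSpace ℂ M)
    (X : Matrix (M × D) (M × D) ℂ) :
    ‖(tensorLeft D a)ᴴ * X * tensorLeft D b‖ ≤ ‖a‖ * ‖X‖ * ‖b‖ :=
  calc ‖(tensorLeft D a)ᴴ * X * tensorLeft D b‖
      ≤ ‖(tensorLeft D a)ᴴ‖ * ‖X‖ * ‖tensorLeft D b‖ :=
        (l2_opNorm_mul _ _).trans (by gcongr; exact l2_opNorm_mul _ _)
    _ ≤ ‖a‖ * ‖X‖ * ‖b‖ := by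
        rw [l2_opNorm_conjTranspose]
        gcongr <;> exact norm_tensorLeft_le _

lemma norm_slice_sub_le (a b : EuclideanSpace ℂ M) (X : Matrix (M × D) (M × D) ℂ) :
    ‖slice a X - slice b X‖ ≤ ‖a - b‖ * (‖a‖ + ‖b‖) * ‖X‖ := by
  have hsplit : slice a X - slice b X =
      (tensorLeft D (a - b))ᴴ * X * tensorLeft D a +
        (tensorLeft D b)ᴴ * X * tensorLeft D (a - b) := by
    simp only [slice, tensorLeft_sub, conjTranspose_sub, Matrix.sub_mul, Matrix.mul_sub]
    abel
  calc ‖slice a X - slice b X‖ ≤ ‖a - b‖ * ‖X‖ * ‖a‖ + ‖b‖ * ‖X‖ * ‖a - b‖ := by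
        rw [hsplit]
        exact norm_add_le_of_le (norm_conjTranspose_tensorLeft_mul_mul_le _ _ _)
          (norm_conjTranspose_tensorLeft_mul_mul_le _ _ _)
    _ = ‖a - b‖ * (‖a‖ + ‖b‖) * ‖X‖ := by ring

section PartialTranspose

variable {n d : ℕ}

lemma ptrans_eq_sum (X : Matrix (Fin n × Fin d) (Fin n × Fin d) ℂ) :
    ptrans X = ∑ i : Fin n, ∑ j : Fin n, tensorLeft (Fin d) (EuclideanSpace.single i (1 : ℂ)) *
      ((tensorLeft (Fin d) (EuclideanSpace.single j (1 : ℂ)))ᴴ * X *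
        tensorLeft (Fin d) (EuclideanSpace.single i (1 : ℂ))) *
      (tensorLeft (Fin d) (EuclideanSpace.single j (1 : ℂ)))ᴴ := by
  ext p q
  simp only [tensorLeft_mul_mul_conjTranspose]
  simp [Matrix.sum_apply, vecMulVec_apply, mul_apply, tensorLeft, Fintype.sum_prod_type,
    Pi.single_apply, ptrans, apply_ite (starRingEnd ℂ)]

lemma norm_ptrans_le (X : Matrix (Fin n × Fin d) (Fin n × Fin d) ℂ) :
    ‖ptrans X‖ ≤ (n : ℝ) ^ 2 * ‖X‖ := by
  set T : Fin n → Matrix (Fin n × Fin d) (Fin d) ℂ :=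
    fun i => tensorLeft (Fin d) (EuclideanSpace.single i (1 : ℂ))
  have hT : ∀ i, ‖T i‖ ≤ 1 := fun i => (norm_tensorLeft_le _).trans_eq (by simp)
  have hterm : ∀ i j, ‖T i * ((T j)ᴴ * X * T i) * (T j)ᴴ‖ ≤ ‖X‖ := fun i j =>
    calc ‖T i * ((T j)ᴴ * X * T i) * (T j)ᴴ‖
        ≤ ‖T i‖ * ‖(T j)ᴴ * X * T i‖ * ‖(T j)ᴴ‖ :=
          (l2_opNorm_mul _ _).trans (by gcongr; exact l2_opNorm_mul _ _)
      _ ≤ 1 * ‖X‖ * 1 := by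
          gcongr
          · exact hT i
          · simpa using norm_conjTranspose_tensorLeft_mul_mul_le
              (EuclideanSpace.single j (1 : ℂ)) (EuclideanSpace.single i (1 : ℂ)) X
          · exact (l2_opNorm_conjTranspose _).trans_le (hT j)
      _ = ‖X‖ := by ring
  calc ‖ptrans X‖ ≤ ∑ _i : Fin n, ∑ _j : Fin n, ‖X‖ := by
        rw [ptrans_eq_sum]
        exact norm_sum_le_of_le _ fun i _ => norm_sum_le_of_le _ fun j _ => hterm i j
    _ = (n : ℝ) ^ 2 * ‖X‖ := by simp; ring

end PartialTranspose

end Slices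

section GUEFamilies

lemma sum_single_mul_mul_single {N S : Type*} [Fintype N] [DecidableEq N] [CommSemiring S]
    (A : Matrix N N S) :
    ∑ a, ∑ b, single a b (1 : S) * A * single b a 1 = A.trace • 1 := by
  ext i j
  simp [Matrix.sum_apply, Matrix.trace, one_apply, single_apply, ite_and]

/-- The coefficients of the normalized GUE matrix. Each unordered pair of indices occurs both as
`(a, b)` and as `(b, a)`, hence the factor `1 / (2 √N)`. -/
def gueCoeff (N : Type*) [Fintype N] [DecidableEq N] (α : N × N × Bool) : Matrix N N ℂ :=
  ((2 * √(Fintype.card N : ℝ))⁻¹ : ℂ) •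
    if α.2.2 then Complex.I • (single α.1 α.2.1 1 - single α.2.1 α.1 1)
    else single α.1 α.2.1 1 + single α.2.1 α.1 1

lemma isGUEFamily_gueCoeff (N : Type*) [Fintype N] [DecidableEq N] :
    IsGUEFamily (gueCoeff N) where
  isHermitian := by
    rintro ⟨a, b, _ | _⟩
    · simp [IsHermitian, gueCoeff, add_comm]
    · simp [IsHermitian, gueCoeff, conjTranspose_smul, ← smul_neg]
  covariance := by
    set c : ℂ := (2 * √(Fintype.card N : ℝ))⁻¹ with hc
    have hcc : 4 * c ^ 2 = (Fintype.card N : ℂ)⁻¹ := by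
      rw [hc, inv_pow, mul_pow, ← Complex.ofReal_pow, Real.sq_sqrt (Nat.cast_nonneg _)]
      push_cast
      rw [mul_inv]
      norm_num [← mul_assoc]
    refine .of_sum_mul_mul fun A => ?_
    have hpair : ∀ a b : N, gueCoeff N (a, b, true) * A * gueCoeff N (a, b, true) +
        gueCoeff N (a, b, false) * A * gueCoeff N (a, b, false) =
        (2 * c ^ 2) • (single a b 1 * A * single b a 1 + single b a 1 * A * single a b 1) := by
      intro a b
      simp only [gueCoeff, if_true, Bool.false_eq_true, if_false, ← hc, Matrix.smul_mul,
        Matrix.mul_smul, smul_smul, Matrix.add_mul, Matrix.mul_add, Matrix.sub_mul, Matrix.mul_sub,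
        smul_sub, smul_add]
      rw [show c * Complex.I * (c * Complex.I) = -c ^ 2 by linear_combination c ^ 2 * Complex.I_sq]
      module
    calc ∑ α, gueCoeff N α * A * gueCoeff N α
        = (2 * c ^ 2) • (∑ a, ∑ b, single a b 1 * A * single b a 1 +
            ∑ a, ∑ b, single b a 1 * A * single a b 1) := by
          simp only [Fintype.sum_prod_type, Fintype.sum_bool, hpair, ← Finset.smul_sum,
            Finset.sum_add_distrib]
      _ = ((Fintype.card N : ℂ)⁻¹ * A.trace) • 1 := by
          rw [Finset.sum_comm (f := fun a b => single b a 1 * A * single a b 1),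
            sum_single_mul_mul_single, ← two_smul ℂ, smul_smul, smul_smul, ← hcc]
          ring_nf

namespace IsGUEFamily

variable {ι N N' : Type*} [Fintype ι] [Fintype N] [DecidableEq N] [Fintype N'] [DecidableEq N']
  {E : ι → Matrix N N ℂ}

lemma compression (hE : IsGUEFamily E) {A : Matrix N N' ℂ} (hA : Aᴴ * A = 1) {c : ℝ}
    (hc : c ^ 2 * (Fintype.card N : ℝ)⁻¹ = (Fintype.card N' : ℝ)⁻¹) :
    IsGUEFamily fun α => (c : ℂ) • (Aᴴ * E α * A) where
  isHermitian α := by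
    have h := isHermitian_conjTranspose_mul_mul A (hE.isHermitian α)
    simp [IsHermitian, h.eq, conjTranspose_smul]
  covariance := by
    have hc' : (c : ℂ) ^ 2 * (Fintype.card N : ℂ)⁻¹ = (Fintype.card N' : ℂ)⁻¹ := by
      simpa using congrArg ((↑) : ℝ → ℂ) hc
    exact hc' ▸ (hE.covariance.mul_mul hA).const_smul (c : ℂ)

lemma ptrans {n d : ℕ} {E : ι → Matrix (Fin n × Fin d) (Fin n × Fin d) ℂ} (hE : IsGUEFamily E) :
    IsGUEFamily fun α => ptrans (E α) where
  isHermitian α := by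
    ext p q
    exact (hE.isHermitian α).apply _ _
  covariance p q r s := by
    simp only [_root_.ptrans, hE.covariance _ _ _ _, Prod.ext_iff]
    congr 1
    apply propext
    tauto

end IsGUEFamily

end GUEFamilies

section Semicircle

variable {m σ : ℝ}

lemma integrable_density_SC (m σ : ℝ) :
    Integrable (Set.indicator (Set.Icc (m - 2 * σ) (m + 2 * σ))
      fun y => √(4 * σ ^ 2 - (y - m) ^ 2) / (2 * Real.pi * σ ^ 2)) := by
  rw [integrable_indicator_iff measurableSet_Icc]
  exact (by fun_prop : Continuous fun y : ℝ =>
    √(4 * σ ^ 2 - (y - m) ^ 2) / (2 * Real.pi * σ ^ 2)).integrableOn_Icc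

instance isFiniteMeasure_SC (m σ : ℝ) : IsFiniteMeasure (SC m σ) :=
  isFiniteMeasure_withDensity_ofReal (integrable_density_SC m σ).2

lemma SC_compl_Icc (m σ : ℝ) : SC m σ (Set.Icc (m - 2 * σ) (m + 2 * σ))ᶜ = 0 := by
  rw [SC, withDensity_apply _ measurableSet_Icc.compl,
    setLIntegral_congr_fun (g := fun _ => 0) measurableSet_Icc.compl
      fun y hy => by simp [Set.indicator_of_notMem hy], lintegral_zero]

lemma msupport_SC_subset (m σ : ℝ) : msupport (SC m σ) ⊆ Set.Icc (m - 2 * σ) (m + 2 * σ) :=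
  fun _ hx => by_contra fun hn => (hx _ isClosed_Icc.isOpen_compl hn).ne' (SC_compl_Icc m σ)

lemma integrable_SC {f : ℝ → ℝ} (hf : Continuous f) : Integrable f (SC m σ) := by
  obtain ⟨c, hc⟩ := isCompact_Icc.exists_bound_of_continuousOn
    (s := Set.Icc (m - 2 * σ) (m + 2 * σ)) hf.continuousOn
  refine .of_bound hf.aestronglyMeasurable c ?_
  filter_upwards [compl_mem_ae_iff.2 (SC_compl_Icc m σ)] with x hx
  exact hc x (not_not.1 hx)

lemma integral_SC (hσ : 0 < σ) (f : ℝ → ℝ) :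
    ∫ x, f x ∂(SC m σ) =
      (∫ x in (-2)..2, f (m + σ * x) * √(4 - x ^ 2)) / (2 * Real.pi) := by
  set ρ : ℝ → ℝ := fun y => √(4 * σ ^ 2 - (y - m) ^ 2) / (2 * Real.pi * σ ^ 2)
  have hρ : ∀ x, ρ (m + σ * x) = σ⁻¹ * √(4 - x ^ 2) / (2 * Real.pi) := fun x => by
    have hsqrt : √(4 * σ ^ 2 - (m + σ * x - m) ^ 2) = σ * √(4 - x ^ 2) := by
      rw [show 4 * σ ^ 2 - (m + σ * x - m) ^ 2 = σ ^ 2 * (4 - x ^ 2) by ring,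
        Real.sqrt_mul (by positivity), Real.sqrt_sq hσ.le]
    simp only [ρ, hsqrt]
    field_simp
  have hmeas : Measurable (Set.indicator (Set.Icc (m - 2 * σ) (m + 2 * σ)) ρ) :=
    (by fun_prop : Measurable ρ).indicator measurableSet_Icc
  have hdensity : ∀ x, (ENNReal.ofReal
      (Set.indicator (Set.Icc (m - 2 * σ) (m + 2 * σ)) ρ x)).toReal • f x =
      Set.indicator (Set.Icc (m - 2 * σ) (m + 2 * σ)) (fun y => f y * ρ y) x := fun x => by
    rw [ENNReal.toReal_ofReal (Set.indicator_nonneg (fun y _ => by positivity) x), smul_eq_mul,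
      mul_comm, ← Set.indicator_mul_right]
  calc ∫ x, f x ∂(SC m σ) = ∫ y in (m + σ * -2)..(m + σ * 2), f y * ρ y := by
        rw [SC, integral_withDensity_eq_integral_toReal_smul hmeas.ennreal_ofReal (by simp)]
        simp only [hdensity]
        rw [integral_indicator measurableSet_Icc, integral_Icc_eq_integral_Ioc,
          intervalIntegral.integral_of_le (by linarith)]
        ring_nf
    _ = ∫ x in (-2)..2, σ * (f (m + σ * x) * ρ (m + σ * x)) := by
        rw [intervalIntegral.integral_const_mul,
          intervalIntegral.mul_integral_comp_add_mul (f := fun y => f y * ρ y)]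
    _ = (∫ x in (-2)..2, f (m + σ * x) * √(4 - x ^ 2)) / (2 * Real.pi) := by
        rw [← intervalIntegral.integral_div]
        congr 1
        funext x
        rw [hρ]
        field_simp

lemma integral_SC_zero_one (f : ℝ → ℝ) :
    ∫ x, f x ∂(SC 0 1) = (∫ x in (-2)..2, f x * √(4 - x ^ 2)) / (2 * Real.pi) := by
  simp [integral_SC]

lemma integral_SC_eq_integral_SC_zero_one (hσ : 0 < σ) (f : ℝ → ℝ) :
    ∫ x, f x ∂(SC m σ) = ∫ x, f (m + σ * x) ∂(SC 0 1) := by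
  rw [integral_SC hσ, integral_SC_zero_one]

lemma integral_SC_zero_one_pos {f : ℝ → ℝ} (hf : Continuous f) (hnonneg : ∀ x, 0 ≤ f x)
    (hpos : ∃ x ∈ Set.Ioo (-2 : ℝ) 2, 0 < f x) : 0 < ∫ x, f x ∂(SC 0 1) := by
  obtain ⟨x, hx, hfx⟩ := hpos
  rw [integral_SC_zero_one]
  refine div_pos (intervalIntegral.integral_pos (by norm_num)
    (by fun_prop) (fun y _ => mul_nonneg (hnonneg y) (Real.sqrt_nonneg _))
    ⟨x, Set.Ioo_subset_Icc_self hx, mul_pos hfx (Real.sqrt_pos.2 ?_)⟩) (by positivity)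
  nlinarith [hx.1, hx.2]

lemma integral_one_SC_zero_one : ∫ _x, (1 : ℝ) ∂(SC 0 1) = 1 := by
  have hscale := intervalIntegral.mul_integral_comp_mul_left (a := -1) (b := 1)
    (f := fun x : ℝ => √(4 - x ^ 2)) 2
  have hsqrt : ∀ x : ℝ, √(4 - (2 * x) ^ 2) = 2 * √(1 - x ^ 2) := fun x => by
    rw [show 4 - (2 * x) ^ 2 = 2 ^ 2 * (1 - x ^ 2) by ring, Real.sqrt_mul (by positivity),
      Real.sqrt_sq (by norm_num)]
  simp only [hsqrt, intervalIntegral.integral_const_mul, integral_sqrt_one_sub_sq] at hscale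
  rw [integral_SC_zero_one, div_eq_one_iff_eq (by positivity)]
  norm_num at hscale
  simp only [one_mul]
  linarith

instance isProbabilityMeasure_SC_zero_one : IsProbabilityMeasure (SC 0 1) :=
  isProbabilityMeasure_iff_real.2 (by simpa using integral_one_SC_zero_one)

lemma hasDerivAt_mul_sqrt_four_sub_sq {x : ℝ} (hx : x ∈ Set.Ioo (-2 : ℝ) 2) :
    HasDerivAt (fun x : ℝ => (4 - x ^ 2) * √(4 - x ^ 2)) (-(3 * x * √(4 - x ^ 2))) x := by
  have hpos : 0 < 4 - x ^ 2 := by nlinarith [hx.1, hx.2]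
  have hd : HasDerivAt (fun x : ℝ => 4 - x ^ 2) (-(2 * x)) x := by
    simpa using (hasDerivAt_pow 2 x).const_sub 4
  refine (hd.mul (hd.sqrt hpos.ne')).congr_deriv ?_
  have hs := Real.mul_self_sqrt hpos.le
  have hs0 : √(4 - x ^ 2) ≠ 0 := (Real.sqrt_pos.2 hpos).ne'
  field_simp
  linear_combination x * hs

/-- A function of the form `(4 - x ^ 2) g' - 3 x g` times the semicircular density is the derivative
of `g (4 - x ^ 2) ^ (3 / 2)`, up to a constant. -/
lemma integral_SC_zero_one_deriv {g g' : ℝ → ℝ} (hg : ∀ x, HasDerivAt g (g' x) x)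
    (hg' : Continuous g') : ∫ x, ((4 - x ^ 2) * g' x - 3 * x * g x) ∂(SC 0 1) = 0 := by
  have hcont : Continuous g := continuous_iff_continuousAt.2 fun x => (hg x).continuousAt
  rw [integral_SC_zero_one, intervalIntegral.integral_eq_sub_of_hasDerivAt_of_le
    (f := fun x : ℝ => g x * ((4 - x ^ 2) * √(4 - x ^ 2))) (by norm_num) (by fun_prop)
    (fun x hx => ((hg x).mul (hasDerivAt_mul_sqrt_four_sub_sq hx)).congr_deriv (by ring))
    (Continuous.intervalIntegrable (by fun_prop) _ _)]
  norm_num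

lemma integral_pow_add_two_SC_zero_one (k : ℕ) :
    (k + 4) * ∫ x, x ^ (k + 2) ∂(SC 0 1) = 4 * (k + 1) * ∫ x, x ^ k ∂(SC 0 1) := by
  have h := integral_SC_zero_one_deriv (fun x => hasDerivAt_pow (k + 1) x) (by fun_prop)
  have hexpand : ∀ x : ℝ, (4 - x ^ 2) * (((k + 1 : ℕ) : ℝ) * x ^ (k + 1 - 1)) - 3 * x * x ^ (k + 1)
      = 4 * (k + 1) * x ^ k - (k + 4) * x ^ (k + 2) := fun x => by
    rw [Nat.add_sub_cancel]
    push_cast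
    ring
  simp only [hexpand] at h
  rw [integral_sub (integrable_SC (by fun_prop)) (integrable_SC (by fun_prop)),
    integral_const_mul, integral_const_mul] at h
  linarith

lemma integral_id_SC_zero_one : ∫ x, x ∂(SC 0 1) = 0 := by
  have h := integral_SC_zero_one_deriv (fun x => hasDerivAt_const x (1 : ℝ)) continuous_const
  simp only [mul_zero, zero_sub, mul_one] at h
  rw [integral_neg, integral_const_mul] at h
  linarith

lemma integral_pow_even_SC_zero_one (k : ℕ) : ∫ x, x ^ (2 * k) ∂(SC 0 1) = catalan k := by
  induction k with
  | zero => simp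
  | succ k ih =>
    have hrec := integral_pow_add_two_SC_zero_one (2 * k)
    rw [ih] at hrec
    have hk : ((k : ℝ) + 1) * catalan k = k.centralBinom := by
      exact_mod_cast succ_mul_catalan_eq_centralBinom k
    have hk' : ((k : ℝ) + 2) * catalan (k + 1) = (k + 1).centralBinom := by
      exact_mod_cast succ_mul_catalan_eq_centralBinom (k + 1)
    have hbinom : ((k : ℝ) + 1) * (k + 1).centralBinom = 2 * (2 * k + 1) * k.centralBinom := by
      exact_mod_cast Nat.succ_mul_centralBinom_succ k
    rw [← hk, ← hk'] at hbinom
    push_cast at hrec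
    rw [mul_add 2 k 1, mul_one]
    refine mul_left_cancel₀ (by positivity : ((k : ℝ) + 1) * (k + 2) ≠ 0) ?_
    linear_combination (k + 1 : ℝ) / 2 * hrec - hbinom

lemma integral_pow_odd_SC_zero_one (k : ℕ) : ∫ x, x ^ (2 * k + 1) ∂(SC 0 1) = 0 := by
  induction k with
  | zero => simpa using integral_id_SC_zero_one
  | succ k ih =>
    have hrec := integral_pow_add_two_SC_zero_one (2 * k + 1)
    rw [ih, mul_zero] at hrec
    exact (mul_eq_zero.1 hrec).resolve_left (by positivity)

lemma semicircleMoment_odd (k : ℕ) : semicircleMoment (2 * k + 1) = 0 := by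
  induction k using Nat.strong_induction_on with
  | _ k ih =>
    rw [semicircleMoment_succ]
    refine Finset.sum_eq_zero fun j hj => ?_
    have hj := Finset.mem_range.1 hj
    rcases Nat.even_or_odd' j with ⟨i, rfl | rfl⟩
    · rw [show 2 * k - 1 - 2 * i = 2 * (k - 1 - i) + 1 by omega, ih _ (by omega), mul_zero]
    · rw [ih i (by omega), zero_mul]

lemma sum_range_two_mul_add_one_of_odd_eq_zero {f : ℕ → ℝ} (hf : ∀ i, f (2 * i + 1) = 0)
    (n : ℕ) : ∑ j ∈ Finset.range (2 * n + 1), f j = ∑ i ∈ Finset.range (n + 1), f (2 * i) := by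
  induction n with
  | zero => simp
  | succ n ih =>
    rw [mul_add_one, Finset.sum_range_succ, Finset.sum_range_succ, ih, hf, add_zero,
      Finset.sum_range_succ _ (n + 1), mul_add_one]

lemma semicircleMoment_even (k : ℕ) : semicircleMoment (2 * k) = catalan k := by
  induction k using Nat.strong_induction_on with
  | _ k ih =>
    rcases k with _ | k
    · simp [semicircleMoment_zero]
    · rw [show 2 * (k + 1) = 2 * k + 1 + 1 by ring, semicircleMoment_succ,
        sum_range_two_mul_add_one_of_odd_eq_zero fun i => by simp [semicircleMoment_odd],
        catalan_succ, Nat.cast_sum, ← Fin.sum_univ_eq_sum_range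
          fun i => semicircleMoment (2 * i) * semicircleMoment (2 * k + 1 - 1 - 2 * i)]
      refine Finset.sum_congr rfl fun i _ => ?_
      rw [show 2 * k + 1 - 1 - 2 * (i : ℕ) = 2 * (k - i) by omega, ih _ i.2, ih _ (by omega),
        Nat.cast_mul]

lemma integral_pow_SC_zero_one (k : ℕ) : ∫ x, x ^ k ∂(SC 0 1) = semicircleMoment k := by
  rcases Nat.even_or_odd' k with ⟨i, rfl | rfl⟩
  · rw [integral_pow_even_SC_zero_one, semicircleMoment_even]
  · rw [integral_pow_odd_SC_zero_one, semicircleMoment_odd]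

lemma integral_eval_SC_zero_one (p : ℝ[X]) :
    ∫ x, p.eval x ∂(SC 0 1) = ∑ k ∈ p.support, p.coeff k * semicircleMoment k := by
  simp only [Polynomial.eval_eq_sum, Polynomial.sum_def, ← integral_pow_SC_zero_one,
    ← integral_const_mul]
  exact integral_finsetSum _ fun k _ => integrable_SC (by fun_prop)

lemma abs_integral_SC_zero_one_sub_le {f g : ℝ → ℝ} (hf : Continuous f) (hg : Continuous g) {c : ℝ}
    (h : ∀ x ∈ Set.Icc (-2 : ℝ) 2, |f x - g x| ≤ c) :
    |∫ x, f x ∂(SC 0 1) - ∫ x, g x ∂(SC 0 1)| ≤ c := by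
  rw [← integral_sub (integrable_SC hf) (integrable_SC hg)]
  have hbound : ∀ᵐ x ∂(SC 0 1), ‖f x - g x‖ ≤ c := by
    filter_upwards [compl_mem_ae_iff.2 (SC_compl_Icc 0 1)] with x hx
    exact h x (by simpa using hx)
  simpa using norm_integral_le_of_norm_le_const hbound

end Semicircle

section SpectralMatching

open scoped Matrix.Norms.L2Operator

universe u

lemma abs_sum_div_card_sub_le {N : Type*} [Fintype N] [Nonempty N] {f g : N → ℝ} {c : ℝ}
    (h : ∀ i, |f i - g i| ≤ c) :
    |(∑ i, f i) / Fintype.card N - (∑ i, g i) / Fintype.card N| ≤ c := by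
  have hN : (0 : ℝ) < Fintype.card N := Nat.cast_pos.2 Fintype.card_pos
  rw [← sub_div, ← Finset.sum_sub_distrib, abs_div, abs_of_pos hN, div_le_iff₀ hN, mul_comm]
  exact (Finset.abs_sum_le_sum_abs _ _).trans
    ((Finset.sum_le_card_nsmul _ _ c fun i _ => h i).trans_eq (by simp))

variable {N : Type*} [Fintype N] [DecidableEq N]

/-- A Hermitian matrix whose first moments and norm are close to those of the standard semicircular
distribution, the moments up to order `K` with precision `1 / (K + 1)`. -/
structure IsNearSemicircular (K : ℕ) (A : Matrix N N ℂ) : Prop where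
  isHermitian : A.IsHermitian
  abs_sub_lt : ∀ k ≤ K, |normalizedTrace (A ^ k) - semicircleMoment k| < 1 / (K + 1 : ℝ)
  norm_lt : ‖A‖ < 2 + 1 / (K + 1 : ℝ)

lemma abs_eigenvalues_le {A : Matrix N N ℂ} (hA : A.IsHermitian) (i : N) :
    |hA.eigenvalues i| ≤ ‖A‖ :=
  (norm_le_pi_norm hA.eigenvalues i).trans_eq (norm_eq_norm_eigenvalues hA).symm

lemma abs_eigenvalues₀_le {A : Matrix N N ℂ} (hA : A.IsHermitian) (i : Fin (Fintype.card N)) :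
    |hA.eigenvalues₀ i| ≤ ‖A‖ := by
  simpa [IsHermitian.eigenvalues] using
    abs_eigenvalues_le hA (Fintype.equivOfCardEq (Fintype.card_fin _) i)

lemma sum_comp_eigenvalues {A : Matrix N N ℂ} (hA : A.IsHermitian) (f : ℝ → ℝ) :
    ∑ i, f (hA.eigenvalues i) = ∑ i, f (hA.eigenvalues₀ i) :=
  Equiv.sum_comp (Fintype.equivOfCardEq (Fintype.card_fin _)).symm fun i => f (hA.eigenvalues₀ i)

lemma sum_eval_eigenvalues_div_card {A : Matrix N N ℂ} (hA : A.IsHermitian) (p : ℝ[X]) :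
    (∑ i, p.eval (hA.eigenvalues i)) / Fintype.card N =
      ∑ k ∈ p.support, p.coeff k * normalizedTrace (A ^ k) := by
  simp only [normalizedTrace_pow_of_isHermitian hA, Polynomial.eval_eq_sum, Polynomial.sum_def]
  rw [Finset.sum_comm, Finset.sum_div]
  simp only [Finset.sum_div, Finset.mul_sum, mul_div_assoc]

namespace IsNearSemicircular

variable {K : ℕ} {A : Matrix N N ℂ}

lemma abs_eigenvalues_le_three (hA : IsNearSemicircular K A) (i : N) :
    |hA.isHermitian.eigenvalues i| ≤ 3 := by
  have hK : 1 / (K + 1 : ℝ) ≤ 1 :=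
    (div_le_one (by positivity)).2 (le_add_of_nonneg_left (Nat.cast_nonneg K))
  linarith [abs_eigenvalues_le hA.isHermitian i, hA.norm_lt]

lemma abs_sum_eval_eigenvalues_sub_le (hA : IsNearSemicircular K A) {p : ℝ[X]}
    (hp : p.natDegree ≤ K) :
    |(∑ i, p.eval (hA.isHermitian.eigenvalues i)) / Fintype.card N - ∫ x, p.eval x ∂(SC 0 1)| ≤
      (∑ k ∈ p.support, |p.coeff k|) * (1 / (K + 1 : ℝ)) := by
  rw [sum_eval_eigenvalues_div_card, integral_eval_SC_zero_one, ← Finset.sum_sub_distrib,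
    Finset.sum_mul]
  refine Finset.abs_sum_le_sum_abs _ _ |>.trans (Finset.sum_le_sum fun k hk => ?_)
  rw [← mul_sub, abs_mul]
  gcongr
  exact (hA.abs_sub_lt k ((le_natDegree_of_mem_supp k hk).trans hp)).le

end IsNearSemicircular

lemma eventually_abs_sum_eigenvalues_sub_le {f : ℝ → ℝ} (hf : Continuous f) {δ : ℝ} (hδ : 0 < δ) :
    ∀ᶠ K : ℕ in atTop, ∀ (N : Type u) [Fintype N] [DecidableEq N] [Nonempty N] (A : Matrix N N ℂ)
      (hA : IsNearSemicircular K A),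
      |(∑ i, f (hA.isHermitian.eigenvalues i)) / Fintype.card N - ∫ x, f x ∂(SC 0 1)| ≤ δ := by
  obtain ⟨p, hp⟩ := exists_polynomial_near_of_continuousOn (-3) 3 f hf.continuousOn (δ / 3)
    (by positivity)
  have hlim : Tendsto (fun K : ℕ => (∑ k ∈ p.support, |p.coeff k|) * (1 / (K + 1 : ℝ))) atTop
      (𝓝 0) := by
    simpa using tendsto_one_div_add_atTop_nhds_zero_nat.const_mul (∑ k ∈ p.support, |p.coeff k|)
  filter_upwards [hlim.eventually_lt_const (by positivity : 0 < δ / 3),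
    eventually_ge_atTop p.natDegree] with K hK hdeg N _ _ _ A hA
  have hfp : |(∑ i, f (hA.isHermitian.eigenvalues i)) / Fintype.card N -
      (∑ i, p.eval (hA.isHermitian.eigenvalues i)) / Fintype.card N| ≤ δ / 3 :=
    abs_sum_div_card_sub_le fun i => by
      rw [abs_sub_comm]
      exact (hp _ (abs_le.1 (hA.abs_eigenvalues_le_three i))).le
  have hpp := (hA.abs_sum_eval_eigenvalues_sub_le hdeg).trans hK.le
  have hpf : |∫ x, p.eval x ∂(SC 0 1) - ∫ x, f x ∂(SC 0 1)| ≤ δ / 3 :=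
    abs_integral_SC_zero_one_sub_le p.continuous hf fun x hx =>
      (hp x ⟨by linarith [hx.1], by linarith [hx.2]⟩).le
  rw [abs_le] at *
  constructor <;> linarith [hfp.1, hfp.2, hpp.1, hpp.2, hpf.1, hpf.2]

/-- The continuous function equal to `0` below `t`, to `1` above `t + h`, and affine between, used
to count eigenvalues. -/
def ramp (h t x : ℝ) : ℝ := max 0 (min 1 ((x - t) / h))

section Ramp

variable {h t x : ℝ}

lemma continuous_ramp (h t : ℝ) : Continuous (ramp h t) := by
  unfold ramp
  fun_prop

lemma ramp_nonneg (h t x : ℝ) : 0 ≤ ramp h t x := le_max_left _ _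

lemma ramp_le_one (h t x : ℝ) : ramp h t x ≤ 1 := max_le zero_le_one (min_le_left _ _)

lemma ramp_eq_zero (hh : 0 < h) (hx : x ≤ t) : ramp h t x = 0 :=
  max_eq_left ((min_le_right _ _).trans (div_nonpos_of_nonpos_of_nonneg (by linarith) hh.le))

lemma ramp_eq_one (hh : 0 < h) (hx : t + h ≤ x) : ramp h t x = 1 := by
  have : 1 ≤ (x - t) / h := by rw [le_div_iff₀ hh]; linarith
  rw [ramp, min_eq_left this, max_eq_right zero_le_one]

lemma ramp_pos (hh : 0 < h) (hx : t < x) : 0 < ramp h t x :=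
  lt_max_of_lt_right (lt_min one_pos (div_pos (by linarith) hh))

lemma ramp_add_le (hh : 0 < h) (t x : ℝ) : ramp h (t + h) x ≤ ramp h t x :=
  max_le_max le_rfl (min_le_min le_rfl (by gcongr; linarith))

lemma integral_ramp_lt (hh : 0 < h) (ht : t ∈ Set.Ico (-2) 2) :
    ∫ x, ramp h (t + h) x ∂(SC 0 1) < ∫ x, ramp h t x ∂(SC 0 1) := by
  obtain ⟨x, htx, hx⟩ := exists_between (lt_min (lt_add_of_pos_right t hh) ht.2)
  rw [lt_min_iff] at hx
  rw [← sub_pos, ← integral_sub (integrable_SC (continuous_ramp _ _))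
    (integrable_SC (continuous_ramp _ _))]
  refine integral_SC_zero_one_pos ((continuous_ramp _ _).sub (continuous_ramp _ _))
    (fun y => sub_nonneg.2 (ramp_add_le hh t y)) ⟨x, ⟨ht.1.trans_lt htx, hx.2⟩, ?_⟩
  rw [ramp_eq_zero hh hx.1.le, sub_zero]
  exact ramp_pos hh htx

lemma lt_of_sum_ramp_le {n : ℕ} {a b : Fin n → ℝ} (ha : Antitone a) (hb : Antitone b) (hh : 0 < h)
    (hab : ∑ l, ramp h (t + h) (a l) ≤ ∑ l, ramp h t (b l)) {i : Fin n} (hi : b i ≤ t) :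
    a i < t + 2 * h := by
  by_contra! hcon
  have hlower : (i : ℝ) + 1 ≤ ∑ l, ramp h (t + h) (a l) :=
    calc (i : ℝ) + 1 = ∑ l ∈ Finset.Iic i, ramp h (t + h) (a l) := by
          rw [Finset.sum_congr rfl fun l hl => ramp_eq_one hh
            (by linarith [ha (Finset.mem_Iic.1 hl)])]
          simp
      _ ≤ ∑ l, ramp h (t + h) (a l) := Finset.sum_le_sum_of_subset_of_nonneg
          (Finset.subset_univ _) fun _ _ _ => ramp_nonneg _ _ _
  have hupper : ∑ l, ramp h t (b l) ≤ i :=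
    calc ∑ l, ramp h t (b l) = ∑ l ∈ Finset.Iio i, ramp h t (b l) :=
          (Finset.sum_subset (Finset.subset_univ _) fun l _ hl => ramp_eq_zero hh
            ((hb (not_lt.1 (mt Finset.mem_Iio.2 hl))).trans hi)).symm
      _ ≤ ∑ _l ∈ Finset.Iio i, (1 : ℝ) := Finset.sum_le_sum fun _ _ => ramp_le_one _ _ _
      _ = i := by simp
  linarith

end Ramp

lemma eventually_sum_ramp_le {h t : ℝ} (hh : 0 < h) (ht : t ∈ Set.Ico (-2) 2) :
    ∀ᶠ K : ℕ in atTop, ∀ (N : Type u) [Fintype N] [DecidableEq N] [Nonempty N] (A B : Matrix N N ℂ)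
      (hA : IsNearSemicircular K A) (hB : IsNearSemicircular K B),
      ∑ i, ramp h (t + h) (hA.isHermitian.eigenvalues₀ i) ≤
        ∑ i, ramp h t (hB.isHermitian.eigenvalues₀ i) := by
  obtain ⟨c, hc, hc'⟩ := exists_between (integral_ramp_lt hh ht)
  filter_upwards
    [eventually_abs_sum_eigenvalues_sub_le (continuous_ramp h t) (sub_pos.2 hc'),
    eventually_abs_sum_eigenvalues_sub_le (continuous_ramp h (t + h)) (sub_pos.2 hc)]
    with K hlow hhigh N _ _ _ A B hA hB
  have hN : (0 : ℝ) < Fintype.card N := Nat.cast_pos.2 Fintype.card_pos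
  rw [← sum_comp_eigenvalues, ← sum_comp_eigenvalues, ← div_le_div_iff_of_pos_right hN]
  linarith [(abs_le.1 (hlow N B hB)).1, (abs_le.1 (hhigh N A hA)).2]

lemma exists_natCast_mul_mem_Icc {h s : ℝ} (hh : 0 < h) (hs : -h ≤ s) :
    ∃ j : ℕ, (j : ℝ) * h ∈ Set.Icc s (s + 2 * h) := by
  refine ⟨⌈s / h⌉₊, ?_, ?_⟩
  · rw [← div_le_iff₀ hh]
    exact Nat.le_ceil _
  · rcases le_or_gt 0 (s / h) with hsh | hsh
    · have := Nat.ceil_lt_add_one hsh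
      rw [← sub_lt_iff_lt_add, lt_div_iff₀ hh] at this
      linarith
    · rw [Nat.ceil_eq_zero.2 hsh.le]
      push_cast
      linarith

lemma eventually_eigenvalues₀_le {ε : ℝ} (hε : 0 < ε) :
    ∀ᶠ K : ℕ in atTop, ∀ (N : Type u) [Fintype N] [DecidableEq N] [Nonempty N] (A B : Matrix N N ℂ)
      (hA : IsNearSemicircular K A) (hB : IsNearSemicircular K B) (i : Fin (Fintype.card N)),
      hA.isHermitian.eigenvalues₀ i ≤ hB.isHermitian.eigenvalues₀ i + ε := by
  obtain ⟨h, hh, rfl⟩ : ∃ h > 0, ε = 4 * h := ⟨ε / 4, by positivity, by ring⟩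
  have hgrid : ∀ᶠ K : ℕ in atTop, ∀ j ∈ Finset.range ⌈4 / h⌉₊, ∀ (N : Type u) [Fintype N]
      [DecidableEq N] [Nonempty N] (A B : Matrix N N ℂ)
      (hA : IsNearSemicircular K A) (hB : IsNearSemicircular K B),
      ∑ i, ramp h (-2 + j * h + h) (hA.isHermitian.eigenvalues₀ i) ≤
        ∑ i, ramp h (-2 + j * h) (hB.isHermitian.eigenvalues₀ i) := by
    refine (Filter.eventually_all_finset _).2 fun j hj => eventually_sum_ramp_le hh ⟨?_, ?_⟩
    · linarith [mul_nonneg (Nat.cast_nonneg (α := ℝ) j) hh.le]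
    · linarith [(lt_div_iff₀ hh).1 (Nat.lt_ceil.1 (Finset.mem_range.1 hj))]
  filter_upwards [hgrid, tendsto_one_div_add_atTop_nhds_zero_nat.eventually_lt_const hh]
    with K hK hKh N _ _ _ A B hA hB i
  by_contra! hcon
  have hlow : -2 - h ≤ hB.isHermitian.eigenvalues₀ i := by
    linarith [neg_le_of_abs_le (abs_eigenvalues₀_le hB.isHermitian i), hB.norm_lt]
  have hhigh : hA.isHermitian.eigenvalues₀ i < 2 + h := by
    linarith [le_of_abs_le (abs_eigenvalues₀_le hA.isHermitian i), hA.norm_lt]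
  obtain ⟨j, hj, hj'⟩ := exists_natCast_mul_mem_Icc hh (by linarith :
    -h ≤ hB.isHermitian.eigenvalues₀ i + 2)
  have hjmem : j ∈ Finset.range ⌈4 / h⌉₊ :=
    Finset.mem_range.2 (Nat.lt_ceil.2 ((lt_div_iff₀ hh).2 (by linarith)))
  have := lt_of_sum_ramp_le hA.isHermitian.eigenvalues₀_antitone
    hB.isHermitian.eigenvalues₀_antitone hh (hK j hjmem N A B hA hB) (i := i) (by linarith)
  linarith

lemma exists_unitary_norm_sub_le {A B : Matrix N N ℂ} (hA : A.IsHermitian) (hB : B.IsHermitian)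
    {ε : ℝ} (hε : 0 ≤ ε) (h : ∀ i, |hA.eigenvalues i - hB.eigenvalues i| ≤ ε) :
    ∃ W : unitary (Matrix N N ℂ), ‖Unitary.conjStarAlgAut ℂ _ W A - B‖ ≤ ε := by
  set U := hA.eigenvectorUnitary
  set V := hB.eigenvectorUnitary
  have hconj : Unitary.conjStarAlgAut ℂ _ (V * star U) A - B = Unitary.conjStarAlgAut ℂ _ V
      (diagonal fun i => ((hA.eigenvalues i - hB.eigenvalues i : ℝ) : ℂ)) := by
    conv_lhs => rw [hA.spectral_theorem, hB.spectral_theorem]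
    rw [← StarAlgEquiv.mul_apply, ← map_mul, mul_assoc, Unitary.star_mul_self, mul_one,
      ← map_sub, diagonal_sub]
    simp
  refine ⟨V * star U, ?_⟩
  rw [hconj, StarAlgEquiv.norm_map, l2_opNorm_diagonal, pi_norm_le_iff_of_nonneg hε]
  exact fun i => (Complex.norm_real _).trans_le (h i)

lemma eventually_exists_unitary_norm_sub_le {ε : ℝ} (hε : 0 < ε) :
    ∀ᶠ K : ℕ in atTop, ∀ (N : Type u) [Fintype N] [DecidableEq N] [Nonempty N] (A B : Matrix N N ℂ),
      IsNearSemicircular K A → IsNearSemicircular K B →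
      ∃ W : unitary (Matrix N N ℂ), ‖Unitary.conjStarAlgAut ℂ _ W A - B‖ ≤ ε := by
  filter_upwards [eventually_eigenvalues₀_le hε] with K hK N _ _ _ A B hA hB
  refine exists_unitary_norm_sub_le hA.isHermitian hB.isHermitian hε.le fun i => ?_
  rw [abs_sub_le_iff, sub_le_iff_le_add', sub_le_iff_le_add']
  exact ⟨hK N A B hA hB _, hK N B A hB hA _⟩

end SpectralMatching

lemma map_gaussianMatrix {ι N N' : Type*} [Fintype ι] (L : Matrix N N ℂ →ₗ[ℂ] Matrix N' N' ℂ)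
    (E : ι → Matrix N N ℂ) (g : ι → ℝ) :
    L (gaussianMatrix E g) = gaussianMatrix (fun α => L (E α)) g := by
  simp [gaussianMatrix]

section UnitaryHaar

open scoped Matrix.Norms.L2Operator ENNReal

instance borelSpace_matrix (m n : Type*) [Countable m] [Countable n] :
    BorelSpace (Matrix m n ℂ) :=
  inferInstanceAs (BorelSpace (m → n → ℂ))

variable {N : Type*} [Fintype N] [DecidableEq N]

instance compactSpace_unitary_matrix : CompactSpace (unitary (Matrix N N ℂ)) := by
  have : ProperSpace (Matrix N N ℂ) := FiniteDimensional.proper ℂ _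
  refine isCompact_iff_compactSpace.1 (Metric.isCompact_of_isClosed_isBounded isClosed_unitary
    (Metric.isBounded_closedBall (x := 0) (r := 1) |>.subset fun U hU => ?_))
  exact mem_closedBall_zero_iff.2
    (norm_le_one_of_conjTranspose_mul_self_eq_one (Unitary.mem_iff.1 hU).1)

/-- The normalized Haar measure on the unitary group. It is built from Mathlib's left-invariant Haar
measure by inversion in order to be invariant under right multiplication. -/
def unitaryHaar (N : Type*) [Fintype N] [DecidableEq N] : Measure (unitary (Matrix N N ℂ)) :=
  (Measure.haarMeasure ⊤).inv

instance isProbabilityMeasure_unitaryHaar : IsProbabilityMeasure (unitaryHaar N) :=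
  have : IsProbabilityMeasure (Measure.haarMeasure (⊤ : TopologicalSpace.PositiveCompacts
      (unitary (Matrix N N ℂ)))) := ⟨Measure.haarMeasure_self⟩
  Measure.isProbabilityMeasure_map measurable_inv.aemeasurable

instance isMulRightInvariant_unitaryHaar : (unitaryHaar N).IsMulRightInvariant := by
  unfold unitaryHaar
  infer_instance

lemma continuous_conjStarAlgAut_uncurry :
    Continuous fun q : unitary (Matrix N N ℂ) × Matrix N N ℂ =>
      Unitary.conjStarAlgAut ℂ _ q.1 q.2 := by
  simp only [Unitary.conjStarAlgAut_apply]
  fun_prop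

lemma continuous_conjStarAlgAut (U : unitary (Matrix N N ℂ)) :
    Continuous fun X : Matrix N N ℂ => Unitary.conjStarAlgAut ℂ _ U X := by
  simp only [Unitary.conjStarAlgAut_apply]
  fun_prop

/-- A measure on matrices which is invariant under conjugation by unitary matrices: the law of a
unitarily invariant random matrix. -/
def IsConjInvariant (ν : Measure (Matrix N N ℂ)) : Prop :=
  ∀ U : unitary (Matrix N N ℂ), ν.map (Unitary.conjStarAlgAut ℂ _ U) = ν

lemma IsConjInvariant.lintegral_unitaryHaar {ν : Measure (Matrix N N ℂ)} [SFinite ν]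
    (hν : IsConjInvariant ν) {s : Set (Matrix N N ℂ)} (hs : MeasurableSet s) :
    ∫⁻ X, unitaryHaar N {V | Unitary.conjStarAlgAut ℂ _ V X ∈ s} ∂ν = ν s := by
  have hS := continuous_conjStarAlgAut_uncurry.measurable hs
  have hconst : ∀ V : unitary (Matrix N N ℂ),
      ν (Prod.mk V ⁻¹' ((fun q => Unitary.conjStarAlgAut ℂ _ q.1 q.2) ⁻¹' s)) = ν s := fun V => by
    conv_rhs => rw [← hν V, Measure.map_apply (continuous_conjStarAlgAut V).measurable hs]
    rfl
  calc _ = ((unitaryHaar N).prod ν) ((fun q => Unitary.conjStarAlgAut ℂ _ q.1 q.2) ⁻¹' s) :=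
        (Measure.prod_apply_symm hS).symm
    _ = ∫⁻ _, ν s ∂(unitaryHaar N) := (Measure.prod_apply hS).trans (lintegral_congr hconst)
    _ = ν s := by simp

lemma UnitInv.isConjInvariant_map {Ω : Type*} [MeasurableSpace Ω] {ℙ : Measure Ω} {n : ℕ}
    {X : (d : ℕ) → Ω → Matrix (Fin n × Fin d) (Fin n × Fin d) ℂ} (hX : UnitInv ℙ n X) (d : ℕ)
    (hmeas : Measurable (X d)) : IsConjInvariant (ℙ.map (X d)) := fun U => by
  rw [Measure.map_map (continuous_conjStarAlgAut U).measurable hmeas]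
  exact hX d U U.2

lemma continuous_normalizedTrace_pow (k : ℕ) :
    Continuous fun X : Matrix N N ℂ => normalizedTrace (X ^ k) := by
  unfold normalizedTrace
  fun_prop

lemma measurableSet_setOf_isNearSemicircular (K : ℕ) :
    MeasurableSet {X : Matrix N N ℂ | IsNearSemicircular K X} := by
  have h : {X : Matrix N N ℂ | IsNearSemicircular K X} = {X | Xᴴ = X} ∩
      ((⋂ k ≤ K, {X | |normalizedTrace (X ^ k) - semicircleMoment k| < 1 / (K + 1 : ℝ)}) ∩
        {X | ‖X‖ < 2 + 1 / (K + 1 : ℝ)}) := by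
    ext X
    simp only [Set.mem_inter_iff, Set.mem_iInter, Set.mem_ofPred_eq]
    exact ⟨fun h => ⟨h.1, h.2, h.3⟩, fun h => ⟨h.1, h.2.1, h.2.2⟩⟩
  rw [h]
  refine (isClosed_eq (by fun_prop) continuous_id).measurableSet.inter
    ((MeasurableSet.iInter fun k => .iInter fun _ => (isOpen_lt ?_ continuous_const).measurableSet)
      |>.inter (isOpen_lt continuous_norm continuous_const).measurableSet)
  exact ((continuous_normalizedTrace_pow k).sub continuous_const).abs

lemma IsNearSemicircular.of_conj {K : ℕ} {A : Matrix N N ℂ} {U : unitary (Matrix N N ℂ)}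
    (h : IsNearSemicircular K (Unitary.conjStarAlgAut ℂ _ U A)) : IsNearSemicircular K A where
  isHermitian := EquivLike.injective (Unitary.conjStarAlgAut ℂ _ U) <|
    (map_star (Unitary.conjStarAlgAut ℂ _ U) A).trans h.isHermitian
  abs_sub_lt k hk := by
    simpa only [normalizedTrace, ← map_pow, trace_conjStarAlgAut] using h.abs_sub_lt k hk
  norm_lt := by simpa only [StarAlgEquiv.norm_map] using h.norm_lt

lemma IsGUEFamily.conj {ι : Type*} [Fintype ι] {E : ι → Matrix N N ℂ} (hE : IsGUEFamily E)
    (U : unitary (Matrix N N ℂ)) : IsGUEFamily fun α => Unitary.conjStarAlgAut ℂ _ U (E α) := by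
  have hU : (star (U : Matrix N N ℂ))ᴴ * star (U : Matrix N N ℂ) = 1 := by
    simp [← star_eq_conjTranspose]
  simpa [star_eq_conjTranspose] using hE.compression hU (c := 1) (by simp)

lemma conjStarAlgAut_gaussianMatrix {ι : Type*} [Fintype ι] (U : unitary (Matrix N N ℂ))
    (E : ι → Matrix N N ℂ) (g : ι → ℝ) : Unitary.conjStarAlgAut ℂ _ U (gaussianMatrix E g) =
      gaussianMatrix (fun α => Unitary.conjStarAlgAut ℂ _ U (E α)) g :=
  map_gaussianMatrix (Unitary.conjStarAlgAut ℂ _ U).toAlgEquiv.toLinearMap E g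

end UnitaryHaar

section Coupling

open scoped Matrix.Norms.L2Operator ENNReal

variable {N N' : Type*} [Fintype N] [DecidableEq N] [Fintype N'] [DecidableEq N']
  {L : Matrix N N ℂ →ₗ[ℂ] Matrix N' N' ℂ} {C δ r : ℝ} {K : ℕ}

lemma unitaryHaar_le_norm_map_conj_le (hC : 0 ≤ C) (hLC : ∀ X, ‖L X‖ ≤ C * ‖X‖)
    {A B : Matrix N N ℂ} {W : unitary (Matrix N N ℂ)}
    (hW : ‖Unitary.conjStarAlgAut ℂ _ W A - B‖ ≤ δ) :
    unitaryHaar N {V | r + C * δ ≤ ‖L (Unitary.conjStarAlgAut ℂ _ V A)‖} ≤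
      unitaryHaar N {V | r ≤ ‖L (Unitary.conjStarAlgAut ℂ _ V B)‖} := by
  rw [← measure_preimage_mul_right (unitaryHaar N) W]
  refine measure_mono fun V (hV : r + C * δ ≤ ‖L (Unitary.conjStarAlgAut ℂ _ (V * W) A)‖) => ?_
  rw [map_mul, StarAlgEquiv.mul_apply] at hV
  have hdiff : ‖L (Unitary.conjStarAlgAut ℂ _ V (Unitary.conjStarAlgAut ℂ _ W A)) -
      L (Unitary.conjStarAlgAut ℂ _ V B)‖ ≤ C * δ := by
    rw [← map_sub, ← map_sub]
    refine (hLC _).trans ?_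
    rw [StarAlgEquiv.norm_map]
    gcongr
  exact le_of_add_le_add_right (hV.trans (norm_le_norm_add_norm_sub' _ _ |>.trans (by gcongr)))

variable {ι : Type*} [Fintype ι] {E : ι → Matrix N N ℂ} {T : ℝ≥0∞}

lemma lintegral_unitaryHaar_le_norm_map_conj_gaussianMatrix_le
    (hT : ∀ V : unitary (Matrix N N ℂ), stdGaussianPi ι
      {g | r ≤ ‖L (Unitary.conjStarAlgAut ℂ _ V (gaussianMatrix E g))‖} ≤ T) :
    ∫⁻ g, unitaryHaar N {V | r ≤ ‖L (Unitary.conjStarAlgAut ℂ _ V (gaussianMatrix E g))‖}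
      ∂(stdGaussianPi ι) ≤ T := by
  have hL : Continuous L := L.continuous_of_finiteDimensional
  have hS : MeasurableSet {q : unitary (Matrix N N ℂ) × (ι → ℝ) |
      r ≤ ‖L (Unitary.conjStarAlgAut ℂ _ q.1 (gaussianMatrix E q.2))‖} :=
    (isClosed_le continuous_const (hL.comp (continuous_conjStarAlgAut_uncurry.comp
      (continuous_fst.prodMk ((continuous_gaussianMatrix E).comp continuous_snd)))).norm)
      |>.measurableSet
  calc _ = ((unitaryHaar N).prod (stdGaussianPi ι)) {q : unitary (Matrix N N ℂ) × (ι → ℝ) |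
        r ≤ ‖L (Unitary.conjStarAlgAut ℂ _ q.1 (gaussianMatrix E q.2))‖} :=
        (Measure.prod_apply_symm hS).symm
    _ ≤ ∫⁻ _, T ∂(unitaryHaar N) := (Measure.prod_apply hS).trans_le (lintegral_mono hT)
    _ = T := by simp

lemma unitaryHaar_mul_stdGaussianPi_le (hC : 0 ≤ C) (hLC : ∀ X, ‖L X‖ ≤ C * ‖X‖)
    (hT : ∀ V : unitary (Matrix N N ℂ), stdGaussianPi ι
      {g | r ≤ ‖L (Unitary.conjStarAlgAut ℂ _ V (gaussianMatrix E g))‖} ≤ T)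
    {A : Matrix N N ℂ}
    (hA : ∀ B, IsNearSemicircular K B →
      ∃ W : unitary (Matrix N N ℂ), ‖Unitary.conjStarAlgAut ℂ _ W A - B‖ ≤ δ) :
    unitaryHaar N {V | r + C * δ ≤ ‖L (Unitary.conjStarAlgAut ℂ _ V A)‖} *
      stdGaussianPi ι {g | IsNearSemicircular K (gaussianMatrix E g)} ≤ T := by
  have hnear : MeasurableSet {g | IsNearSemicircular K (gaussianMatrix E g)} :=
    (continuous_gaussianMatrix E).measurable (measurableSet_setOf_isNearSemicircular K)
  refine le_trans ?_ (lintegral_unitaryHaar_le_norm_map_conj_gaussianMatrix_le hT)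
  rw [← setLIntegral_const]
  refine (setLIntegral_mono' hnear fun g hg => ?_).trans (setLIntegral_le_lintegral _ _)
  obtain ⟨W, hW⟩ := hA _ hg
  exact unitaryHaar_le_norm_map_conj_le hC hLC hW

lemma IsConjInvariant.measure_mul_stdGaussianPi_le {ν : Measure (Matrix N N ℂ)}
    [IsProbabilityMeasure ν] (hν : IsConjInvariant ν) (hC : 0 ≤ C) (hLC : ∀ X, ‖L X‖ ≤ C * ‖X‖)
    (hT : ∀ V : unitary (Matrix N N ℂ), stdGaussianPi ι
      {g | r ≤ ‖L (Unitary.conjStarAlgAut ℂ _ V (gaussianMatrix E g))‖} ≤ T)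
    (hK : ∀ A B, IsNearSemicircular K A → IsNearSemicircular K B →
      ∃ W : unitary (Matrix N N ℂ), ‖Unitary.conjStarAlgAut ℂ _ W A - B‖ ≤ δ) :
    ν {X | IsNearSemicircular K X ∧ r + C * δ ≤ ‖L X‖} *
      stdGaussianPi ι {g | IsNearSemicircular K (gaussianMatrix E g)} ≤ T := by
  have hL : Continuous L := L.continuous_of_finiteDimensional
  have hbad : MeasurableSet {X | IsNearSemicircular K X ∧ r + C * δ ≤ ‖L X‖} :=
    (measurableSet_setOf_isNearSemicircular K).inter
      (isClosed_le continuous_const hL.norm).measurableSet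
  rw [← hν.lintegral_unitaryHaar hbad, ← lintegral_mul_const' _ _ (measure_ne_top _ _)]
  calc _ ≤ ∫⁻ _, T ∂ν := lintegral_mono fun X => ?_
    _ = T := by simp
  by_cases hX : IsNearSemicircular K X
  · exact le_trans (by gcongr; exact And.right)
      (unitaryHaar_mul_stdGaussianPi_le hC hLC hT fun B hB => hK X B hX hB)
  · have hempty : {V : unitary (Matrix N N ℂ) | Unitary.conjStarAlgAut ℂ _ V X ∈
        {X | IsNearSemicircular K X ∧ r + C * δ ≤ ‖L X‖}} = ∅ :=
      Set.eq_empty_of_forall_notMem fun V hV => hX hV.1.of_conj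
    rw [hempty, measure_empty, zero_mul]
    exact zero_le

end Coupling

section SequenceBound

universe u v

open scoped Matrix.Norms.L2Operator

lemma exists_measureReal_not_isNearSemicircular_le (K : ℕ) :
    ∃ C : ℝ, ∀ (ι : Type u) (N : Type v) [Fintype ι] [Fintype N] [DecidableEq N] [Nonempty N]
      (E : ι → Matrix N N ℂ), IsGUEFamily E →
      (stdGaussianPi ι).real {g | ¬ IsNearSemicircular K (gaussianMatrix E g)} ≤
        C / (Fintype.card N : ℝ) ^ 2 := by
  have hη : (0 : ℝ) < 1 / (K + 1 : ℝ) := by positivity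
  choose C hC using fun k => exists_measureReal_le_abs_normalizedTrace_sub_le.{u, v} k hη
  obtain ⟨C', hC'⟩ := exists_measureReal_le_norm_gaussianMatrix_le.{u, v} (lt_add_of_pos_right 2 hη)
  refine ⟨∑ k ∈ Finset.range (K + 1), C k + C', fun ι N _ _ _ _ E hE => ?_⟩
  have hsub : {g | ¬ IsNearSemicircular K (gaussianMatrix E g)} ⊆
      (⋃ k ∈ Finset.range (K + 1), {g | 1 / (K + 1 : ℝ) ≤
        |normalizedTrace (gaussianMatrix E g ^ k) - semicircleMoment k|}) ∪
      {g | 2 + 1 / (K + 1 : ℝ) ≤ ‖gaussianMatrix E g‖} := by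
    refine fun g hg => by_contra fun hcon => hg ?_
    simp only [Set.mem_union, Set.mem_iUnion, Set.mem_ofPred_eq, not_or, not_exists, not_le,
      Finset.mem_range, Nat.lt_succ_iff] at hcon
    exact ⟨hE.isHermitian_gaussianMatrix g, hcon.1, hcon.2⟩
  calc _ ≤ _ := measureReal_mono hsub
    _ ≤ _ := measureReal_union_le _ _
    _ ≤ ∑ k ∈ Finset.range (K + 1), C k / (Fintype.card N : ℝ) ^ 2 +
          C' / (Fintype.card N : ℝ) ^ 2 :=
        add_le_add ((measureReal_biUnion_finset_le _ _).trans
          (Finset.sum_le_sum fun k _ => hC k ι N E hE)) (hC' ι N E hE)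
    _ = _ := by rw [← Finset.sum_div, add_div]

lemma exists_half_le_measureReal_isNearSemicircular (K : ℕ) :
    ∃ N₀ : ℕ, ∀ (ι : Type u) (N : Type v) [Fintype ι] [Fintype N] [DecidableEq N] [Nonempty N]
      (E : ι → Matrix N N ℂ), IsGUEFamily E → N₀ ≤ Fintype.card N →
      1 / 2 ≤ (stdGaussianPi ι).real {g | IsNearSemicircular K (gaussianMatrix E g)} := by
  obtain ⟨C, hC⟩ := exists_measureReal_not_isNearSemicircular_le.{u, v} K
  obtain ⟨N₀, hN₀⟩ := exists_nat_gt (2 * C)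
  refine ⟨N₀, fun ι N _ _ _ _ E hE hN => ?_⟩
  have hnear : MeasurableSet {g | IsNearSemicircular K (gaussianMatrix E g)} :=
    (continuous_gaussianMatrix E).measurable (measurableSet_setOf_isNearSemicircular K)
  have hN1 : (1 : ℝ) ≤ Fintype.card N := by exact_mod_cast Fintype.card_pos (α := N)
  have hCN : 2 * C ≤ Fintype.card N := hN₀.le.trans (by exact_mod_cast hN)
  have hbad : C / (Fintype.card N : ℝ) ^ 2 ≤ 1 / 2 := by
    rw [div_le_iff₀ (by positivity)]
    nlinarith
  have hcompl := probReal_compl_eq_one_sub (μ := stdGaussianPi ι) hnear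
  linarith [hcompl ▸ hC ι N E hE]

/-- The linear maps which send GUE matrices to GUE matrices. -/
def PreservesGUE {N : Type u} {N' : Type v} [Fintype N] [DecidableEq N] [Fintype N']
    [DecidableEq N'] (L : Matrix N N ℂ →ₗ[ℂ] Matrix N' N' ℂ) : Prop :=
  ∀ ⦃ι : Type u⦄ [Fintype ι] ⦃E : ι → Matrix N N ℂ⦄,
    IsGUEFamily E → IsGUEFamily fun α => L (E α)

lemma exists_measureReal_isNearSemicircular_le_norm_map_le {C ε : ℝ} (hC : 0 ≤ C) (hε : 0 < ε) :
    ∃ K N₀ : ℕ, ∃ c : ℝ, ∀ (N : Type u) (N' : Type v) [Fintype N] [DecidableEq N] [Nonempty N]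
      [Fintype N'] [DecidableEq N'] [Nonempty N'] (L : Matrix N N ℂ →ₗ[ℂ] Matrix N' N' ℂ)
      (ν : Measure (Matrix N N ℂ)) [IsProbabilityMeasure ν], N₀ ≤ Fintype.card N →
      PreservesGUE L → (∀ X, ‖L X‖ ≤ C * ‖X‖) → IsConjInvariant ν →
      ν.real {X | IsNearSemicircular K X ∧ 2 + ε ≤ ‖L X‖} ≤ c / (Fintype.card N' : ℝ) ^ 2 := by
  obtain ⟨δ, hδ, hCδ⟩ := exists_pos_mul_lt (half_pos hε) C
  obtain ⟨K, hK⟩ := (eventually_exists_unitary_norm_sub_le.{u} hδ).exists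
  obtain ⟨N₀, hN₀⟩ := exists_half_le_measureReal_isNearSemicircular.{u, u} K
  obtain ⟨c, hc⟩ := exists_measureReal_le_norm_gaussianMatrix_le.{u, v}
    (lt_add_of_pos_right 2 (half_pos hε))
  refine ⟨K, N₀, 2 * c, fun N N' _ _ _ _ _ _ L ν _ hN hL hLC hν => ?_⟩
  have hE := isGUEFamily_gueCoeff N
  have hT : ∀ V : unitary (Matrix N N ℂ), stdGaussianPi _ {g | 2 + ε / 2 ≤
      ‖L (Unitary.conjStarAlgAut ℂ _ V (gaussianMatrix (gueCoeff N) g))‖} ≤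
        ENNReal.ofReal (c / (Fintype.card N' : ℝ) ^ 2) := fun V => by
    simp only [conjStarAlgAut_gaussianMatrix, map_gaussianMatrix]
    rw [← ofReal_measureReal]
    exact ENNReal.ofReal_le_ofReal (hc _ _ _ (hL (hE.conj V)))
  have hmul := ENNReal.toReal_mono ENNReal.ofReal_ne_top
    (hν.measure_mul_stdGaussianPi_le hC hLC hT (hK N))
  rw [ENNReal.toReal_mul, ENNReal.toReal_ofReal
    (measureReal_nonneg.trans (hc (N × N × Bool) N' _ (hL hE)))] at hmul
  have hhalf := hN₀ _ _ _ hE hN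
  have hsub : {X | IsNearSemicircular K X ∧ 2 + ε ≤ ‖L X‖} ⊆
      {X | IsNearSemicircular K X ∧ 2 + ε / 2 + C * δ ≤ ‖L X‖} :=
    fun X hX => ⟨hX.1, le_trans (by linarith) hX.2⟩
  calc ν.real {X | IsNearSemicircular K X ∧ 2 + ε ≤ ‖L X‖}
      ≤ 2 * (ν.real {X | IsNearSemicircular K X ∧ 2 + ε / 2 + C * δ ≤ ‖L X‖} * (1 / 2)) := by
        rw [mul_one_div, mul_div_cancel₀ _ two_ne_zero]
        exact measureReal_mono hsub
    _ ≤ 2 * (c / (Fintype.card N' : ℝ) ^ 2) := by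
        gcongr
        exact (mul_le_mul_of_nonneg_left hhalf measureReal_nonneg).trans hmul
    _ = 2 * c / (Fintype.card N' : ℝ) ^ 2 := (mul_div_assoc _ _ _).symm

lemma ae_eventually_notMem_of_eventually_measureReal_le {Ω : Type*} [MeasurableSpace Ω]
    {ℙ : Measure Ω} [IsFiniteMeasure ℙ] {s : ℕ → Set Ω} {u : ℕ → ℝ} (hu : Summable u)
    (h : ∀ᶠ d in atTop, ℙ.real (s d) ≤ u d) : ∀ᵐ ω ∂ℙ, ∀ᶠ d in atTop, ω ∉ s d := by
  have hs : Summable fun d => ℙ.real (s d) :=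
    summable_of_isBigO_nat hu <| .of_bound 1 <| h.mono fun d hd => by
      rw [one_mul, Real.norm_of_nonneg measureReal_nonneg]
      exact hd.trans (le_abs_self _)
  refine ae_eventually_notMem ?_
  convert hs.tsum_ofReal_ne_top with d
  exact (ofReal_measureReal).symm

variable {Ω : Type*} [MeasurableSpace Ω] {ℙ : Measure Ω} {n : ℕ}
  {Z : (d : ℕ) → Ω → Matrix (Fin n × Fin d) (Fin n × Fin d) ℂ}

/-- A unitarily invariant sequence of random matrices which almost surely looks semicircular, in
terms of moments and of the norm, up to any prescribed precision. -/
structure IsAsymptSemicircular (ℙ : Measure Ω) (n : ℕ)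
    (Z : (d : ℕ) → Ω → Matrix (Fin n × Fin d) (Fin n × Fin d) ℂ) : Prop where
  measurable (d : ℕ) : Measurable (Z d)
  unitInv : UnitInv ℙ n Z
  ae_eventually_isNearSemicircular :
    ∀ᵐ ω ∂ℙ, ∀ K, ∀ᶠ d in atTop, IsNearSemicircular K (Z d ω)

lemma IsAsymptSemicircular.ae_eventually_norm_map_lt [IsProbabilityMeasure ℙ] [NeZero n]
    (hZ : IsAsymptSemicircular ℙ n Z) {N' : ℕ → Type v} [∀ d, Fintype (N' d)]
    [∀ d, DecidableEq (N' d)] (hcard : ∀ d, d ≤ Fintype.card (N' d))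
    {L : ∀ d, Matrix (Fin n × Fin d) (Fin n × Fin d) ℂ →ₗ[ℂ] Matrix (N' d) (N' d) ℂ}
    (hL : ∀ d ≠ 0, PreservesGUE (L d)) {C : ℝ} (hC : 0 ≤ C) (hLC : ∀ d X, ‖L d X‖ ≤ C * ‖X‖)
    {ε : ℝ} (hε : 0 < ε) : ∀ᵐ ω ∂ℙ, ∀ᶠ d in atTop, ‖L d (Z d ω)‖ < 2 + ε := by
  obtain ⟨K, N₀, c, hc⟩ := exists_measureReal_isNearSemicircular_le_norm_map_le.{0, v} hC hε
  have hbound : ∀ᶠ d : ℕ in atTop,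
      ℙ.real {ω | IsNearSemicircular K (Z d ω) ∧ 2 + ε ≤ ‖L d (Z d ω)‖} ≤
        |c| * ((d : ℝ) ^ 2)⁻¹ := by
    filter_upwards [eventually_ge_atTop N₀, eventually_ne_atTop 0] with d hd hd0
    have : NeZero d := ⟨hd0⟩
    have : Nonempty (N' d) := Fintype.card_pos_iff.1 ((Nat.pos_of_ne_zero hd0).trans_le (hcard d))
    have := Measure.isProbabilityMeasure_map (μ := ℙ) (hZ.measurable d).aemeasurable
    have hN : N₀ ≤ Fintype.card (Fin n × Fin d) := by
      simpa using hd.trans (Nat.le_mul_of_pos_left d (NeZero.pos n))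
    have hmeas : MeasurableSet {X | IsNearSemicircular K X ∧ 2 + ε ≤ ‖L d X‖} :=
      (measurableSet_setOf_isNearSemicircular K).inter (isClosed_le continuous_const
        (L d).continuous_of_finiteDimensional.norm).measurableSet
    have h := hc _ _ (L d) _ hN (hL d hd0) (hLC d)
      (hZ.unitInv.isConjInvariant_map d (hZ.measurable d))
    rw [map_measureReal_apply (hZ.measurable d) hmeas] at h
    have : (0 : ℝ) < d := by exact_mod_cast Nat.pos_of_ne_zero hd0
    calc _ ≤ c / (Fintype.card (N' d) : ℝ) ^ 2 := h
      _ ≤ |c| / (d : ℝ) ^ 2 := by gcongr; exacts [le_abs_self c, by exact_mod_cast hcard d]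
      _ = |c| * ((d : ℝ) ^ 2)⁻¹ := div_eq_mul_inv _ _
  filter_upwards [hZ.ae_eventually_isNearSemicircular,
    ae_eventually_notMem_of_eventually_measureReal_le
      ((Real.summable_nat_pow_inv.2 one_lt_two).mul_left |c|) hbound] with ω hnear hgood
  filter_upwards [hnear K, hgood] with d hd hd'
  exact lt_of_not_ge fun hge => hd' ⟨hd, hge⟩

end SequenceBound

section Standardization

open scoped Matrix.Norms.L2Operator

/-- The matrix `(Y - m) / σ`, obtained from `Y` by the affine change of variables which turns the
distribution `SC m σ` into the standard semicircular distribution `SC 0 1`. -/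
def standardize {N : Type*} [DecidableEq N] (m σ : ℝ) (Y : Matrix N N ℂ) : Matrix N N ℂ :=
  ((σ⁻¹ : ℝ) : ℂ) • (Y - (m : ℂ) • 1)

section Algebra

variable {N : Type*} [DecidableEq N] {m σ : ℝ}

lemma isHermitian_standardize {Y : Matrix N N ℂ} (hY : Y.IsHermitian) :
    (standardize m σ Y).IsHermitian := by
  simp [standardize, IsHermitian, hY.eq]

lemma eq_add_smul_standardize (hσ : σ ≠ 0) (Y : Matrix N N ℂ) :
    Y = (m : ℂ) • 1 + (σ : ℂ) • standardize m σ Y := by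
  have : (σ : ℂ) ≠ 0 := by exact_mod_cast hσ
  simp [standardize, smul_smul, this]

lemma continuous_standardize (m σ : ℝ) :
    Continuous (standardize m σ : Matrix N N ℂ → Matrix N N ℂ) := by
  unfold standardize
  fun_prop

variable [Fintype N]

lemma standardize_conj {U : Matrix N N ℂ} (hU : U ∈ unitary (Matrix N N ℂ))
    (Y : Matrix N N ℂ) : standardize m σ (U * Y * star U) = U * standardize m σ Y * star U := by
  simp [standardize, mul_sub, sub_mul, (Unitary.mem_iff.1 hU).2]

lemma polyApply_standardize_pow (m σ : ℝ) (k : ℕ) (Y : Matrix N N ℂ) :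
    polyApply ((C σ⁻¹ * (X - C m)) ^ k) Y = standardize m σ Y ^ k := by
  have hmap : ((C σ⁻¹ * (X - C m)) ^ k : ℝ[X]).map (algebraMap ℝ ℂ) =
      (C ((σ⁻¹ : ℝ) : ℂ) * (X - C (m : ℂ))) ^ k := by
    simp [Polynomial.map_pow]
  rw [polyApply, hmap, map_pow, map_mul, map_sub, aeval_C, aeval_C, aeval_X, ← Algebra.smul_def,
    Algebra.algebraMap_eq_smul_one, standardize]

end Algebra

variable {Ω : Type*} [MeasurableSpace Ω] {ℙ : Measure Ω} {n : ℕ} {m σ : ℝ}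
  {Y : (d : ℕ) → Ω → Matrix (Fin n × Fin d) (Fin n × Fin d) ℂ}

lemma UnitInv.standardize (hUI : UnitInv ℙ n Y) (hmeas : ∀ d, Measurable (Y d)) :
    UnitInv ℙ n fun d ω => standardize m σ (Y d ω) := by
  intro d U hU
  have hstd := (continuous_standardize (N := Fin n × Fin d) m σ).measurable
  have hconj : Continuous fun X : Matrix (Fin n × Fin d) (Fin n × Fin d) ℂ => U * X * star U := by
    fun_prop
  simp only [← standardize_conj hU]
  have h := congrArg (Measure.map (_root_.standardize m σ)) (hUI d U hU)
  rwa [Measure.map_map (f := fun ω => U * Y d ω * star U) hstd (hconj.measurable.comp (hmeas d)),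
    Measure.map_map hstd (hmeas d)] at h

lemma normalizedTrace_eq_re {d : ℕ} (X : Matrix (Fin n × Fin d) (Fin n × Fin d) ℂ) :
    normalizedTrace X = (((n : ℂ) * (d : ℂ))⁻¹ * X.trace).re := by
  have hcast : ((n : ℂ) * (d : ℂ))⁻¹ = (((n : ℝ) * d)⁻¹ : ℝ) := by push_cast; rfl
  rw [hcast, Complex.re_ofReal_mul, normalizedTrace, Fintype.card_prod, Fintype.card_fin,
    Fintype.card_fin, Nat.cast_mul, div_eq_inv_mul]

lemma StrongConv.tendsto_normalizedTrace_standardize (hconv : StrongConv ℙ n Y (SC m σ))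
    (hσ : 0 < σ) : ∀ᵐ ω ∂ℙ, ∀ k,
      Tendsto (fun d => normalizedTrace (standardize m σ (Y d ω) ^ k)) atTop
        (𝓝 (semicircleMoment k)) := by
  filter_upwards [hconv] with ω hω k
  have h := (Complex.continuous_re.tendsto _).comp (hω ((C σ⁻¹ * (X - C m)) ^ k)).1
  have hinteg : ∫ x, ((C σ⁻¹ * (X - C m)) ^ k : ℝ[X]).eval x ∂SC m σ = semicircleMoment k := by
    rw [integral_SC_eq_integral_SC_zero_one hσ, ← integral_pow_SC_zero_one]
    simp [inv_mul_cancel_left₀ hσ.ne']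
  rw [hinteg, Complex.ofReal_re] at h
  simpa only [Function.comp_def, polyApply_standardize_pow, ← normalizedTrace_eq_re] using h

lemma opNorm_eq_norm {N : Type*} [Fintype N] [DecidableEq N] (X : Matrix N N ℂ) :
    opNorm X = ‖X‖ :=
  rfl

lemma StrongConv.eventually_norm_standardize_lt (hconv : StrongConv ℙ n Y (SC m σ)) (hσ : 0 < σ) :
    ∀ᵐ ω ∂ℙ, ∀ ε > 0, ∀ᶠ d in atTop, ‖standardize m σ (Y d ω)‖ < 2 + ε := by
  filter_upwards [hconv] with ω hω ε hε
  have h := (hω ((C σ⁻¹ * (X - C m)) ^ 1)).2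
  simp only [polyApply_standardize_pow] at h
  simp only [pow_one, opNorm_eq_norm] at h
  refine h.eventually_lt_const ((Real.sSup_le ?_ zero_le_two).trans_lt (lt_add_of_pos_right 2 hε))
  rintro _ ⟨x, hx, rfl⟩
  have hx' := msupport_SC_subset m σ hx
  simp only [eval_mul, eval_C, eval_sub, eval_X, abs_mul, abs_of_pos (inv_pos.2 hσ)]
  rw [inv_mul_le_iff₀ hσ, abs_le]
  constructor <;> linarith [hx'.1, hx'.2]

lemma StrongConv.isAsymptSemicircular_standardize (hconv : StrongConv ℙ n Y (SC m σ))
    (hσ : 0 < σ) (hmeas : ∀ d, Measurable (Y d)) (hherm : ∀ d ω, (Y d ω).IsHermitian)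
    (hUI : UnitInv ℙ n Y) : IsAsymptSemicircular ℙ n fun d ω => standardize m σ (Y d ω) where
  measurable d := (continuous_standardize m σ).measurable.comp (hmeas d)
  unitInv := hUI.standardize hmeas
  ae_eventually_isNearSemicircular := by
    filter_upwards [hconv.tendsto_normalizedTrace_standardize hσ,
      hconv.eventually_norm_standardize_lt hσ] with ω htrace hnorm K
    have hK : (0 : ℝ) < 1 / (K + 1) := by positivity
    have hmoments : ∀ᶠ d in atTop, ∀ k ∈ Finset.range (K + 1),
        |normalizedTrace (standardize m σ (Y d ω) ^ k) - semicircleMoment k| < 1 / (K + 1) :=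
      (Filter.eventually_all_finset _).2 fun k _ => Metric.tendsto_nhds.1 (htrace k) _ hK
    filter_upwards [hmoments, hnorm _ hK] with d hd hd'
    exact ⟨isHermitian_standardize (hherm d ω),
      fun k hk => hd k (Finset.mem_range_succ_iff.2 hk), hd'⟩

end Standardization

section Entanglement

open scoped Matrix.Norms.L2Operator

section Positivity

open scoped MatrixOrder

variable {N : Type*} [Fintype N]

lemma trace_mul_nonneg_of_posSemidef {A B : Matrix N N ℂ} (hA : A.PosSemidef)
    (hB : B.PosSemidef) : 0 ≤ (A * B).trace := by
  classical
  obtain ⟨D, rfl⟩ : ∃ D : Matrix N N ℂ, B = Dᴴ * D :=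
    CStarAlgebra.nonneg_iff_eq_star_mul_self.1 hB.nonneg
  rw [← Matrix.mul_assoc, trace_mul_comm, ← Matrix.mul_assoc]
  exact (hA.mul_mul_conjTranspose_same D).trace_nonneg

variable [DecidableEq N]

lemma posSemidef_smul_one_sub {M : Matrix N N ℂ} (hM : M.IsHermitian) {c : ℝ} (hc : ‖M‖ ≤ c) :
    ((c : ℂ) • 1 - M).PosSemidef := by
  have h : M ≤ algebraMap ℝ _ c :=
    (IsSelfAdjoint.le_algebraMap_norm_self hM).trans (algebraMap_mono _ hc)
  rw [Matrix.le_iff, Algebra.algebraMap_eq_smul_one] at h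
  rwa [Complex.coe_smul]

lemma posSemidef_smul_one_add_smul {M : Matrix N N ℂ} (hM : M.IsHermitian) {m σ : ℝ} (hσ : 0 ≤ σ)
    (h : σ * ‖M‖ ≤ m) : ((m : ℂ) • 1 + (σ : ℂ) • M).PosSemidef := by
  have hherm : (-((σ : ℂ) • M)).IsHermitian := by simp [IsHermitian, hM.eq]
  have hnorm : ‖-((σ : ℂ) • M)‖ ≤ m := by
    rwa [norm_neg, norm_smul, Complex.norm_real, Real.norm_of_nonneg hσ]
  simpa only [sub_neg_eq_add] using posSemidef_smul_one_sub hherm hnorm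

lemma re_trace_mul_le {M B : Matrix N N ℂ} (hM : M.IsHermitian) (hB : B.PosSemidef) {c : ℝ}
    (hc : ‖M‖ ≤ c) : (M * B).trace.re ≤ c * B.trace.re := by
  have h := (Complex.le_def.1
    (trace_mul_nonneg_of_posSemidef (posSemidef_smul_one_sub hM hc) hB)).1
  rwa [sub_mul, smul_mul_assoc, one_mul, trace_sub, trace_smul, smul_eq_mul, Complex.sub_re,
    Complex.re_ofReal_mul, Complex.zero_re, sub_nonneg] at h

end Positivity

section SeparableWitness

lemma re_trace_mul_vecMulVec_kronecker_le {M D : Type*} [Fintype M] [Fintype D] [DecidableEq D]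
    {Z : Matrix (M × D) (M × D) ℂ} (hZ : Z.IsHermitian) {c : ℝ}
    (hc : ∀ a : EuclideanSpace ℂ M, ‖a‖ = 1 → ‖slice a Z‖ ≤ c) (v : M → ℂ) {B : Matrix D D ℂ}
    (hB : B.PosSemidef) : (Z * (vecMulVec v (star v) ⊗ₖ B)).trace.re ≤
      c * (vecMulVec v (star v) ⊗ₖ B).trace.re := by
  set a : EuclideanSpace ℂ M := WithLp.toLp 2 v
  have hprod : (Z * (vecMulVec v (star v) ⊗ₖ B)).trace = (slice a Z * B).trace := by
    rw [show v = WithLp.ofLp a from rfl, ← tensorLeft_mul_mul_conjTranspose, ← Matrix.mul_assoc,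
      trace_mul_comm, slice]
    simp only [Matrix.mul_assoc]
  have htrace : (vecMulVec v (star v) ⊗ₖ B).trace = ((‖a‖ ^ 2 : ℝ) : ℂ) * B.trace := by
    rw [show v = WithLp.ofLp a from rfl, ← tensorLeft_mul_mul_conjTranspose, trace_mul_comm,
      ← Matrix.mul_assoc, conjTranspose_tensorLeft_mul_self, smul_mul_assoc, one_mul, trace_smul,
      smul_eq_mul]
  rw [hprod, htrace, Complex.re_ofReal_mul, ← mul_assoc]
  exact re_trace_mul_le (isHermitian_slice hZ a) hB (norm_slice_le_mul_norm_sq hc a)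

variable {n d : ℕ} {Z S : Matrix (Fin n × Fin d) (Fin n × Fin d) ℂ} {c : ℝ}

lemma re_trace_mul_le_of_mem_SEP (hZ : Z.IsHermitian)
    (hc : ∀ a : EuclideanSpace ℂ (Fin n), ‖a‖ = 1 → ‖slice a Z‖ ≤ c) (hS : S ∈ SEP n d) :
    (Z * S).trace.re ≤ c * S.trace.re := by
  obtain ⟨k, A, B, hA, hB, rfl⟩ := hS
  simp only [trace_sum, Complex.re_sum, Finset.mul_sum]
  refine Finset.sum_le_sum fun i _ => ?_
  obtain ⟨r, v, hv⟩ := posSemidef_iff_eq_sum_vecMulVec.1 (hA i)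
  have hsum : A i ⊗ₖ B i = ∑ l, vecMulVec (v l) (star (v l)) ⊗ₖ B i := by
    ext p q
    simp only [hv, kroneckerMap_apply, Matrix.sum_apply, Finset.sum_mul]
  simp only [hsum, trace_sum, Complex.re_sum, Finset.mul_sum]
  exact Finset.sum_le_sum fun l _ => re_trace_mul_vecMulVec_kronecker_le hZ hc (v l) (hB i)

lemma normalizedTrace_mul_le_of_mem_SEP (hZ : Z.IsHermitian)
    (hc : ∀ a : EuclideanSpace ℂ (Fin n), ‖a‖ = 1 → ‖slice a Z‖ ≤ c) (hS : S ∈ SEP n d) :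
    normalizedTrace (Z * S) ≤ c * normalizedTrace S := by
  rw [normalizedTrace, normalizedTrace, mul_div_assoc']
  gcongr
  exact re_trace_mul_le_of_mem_SEP hZ hc hS

end SeparableWitness

section LinearImages

/-- Partial transposition as a linear map. -/
def ptransLinear (n d : ℕ) : Matrix (Fin n × Fin d) (Fin n × Fin d) ℂ →ₗ[ℂ]
    Matrix (Fin n × Fin d) (Fin n × Fin d) ℂ where
  toFun := ptrans
  map_add' _ _ := rfl
  map_smul' _ _ := rfl

lemma isHermitian_ptrans {n d : ℕ} {X : Matrix (Fin n × Fin d) (Fin n × Fin d) ℂ}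
    (hX : X.IsHermitian) : (ptrans X).IsHermitian := by
  ext p q
  exact hX.apply _ _

lemma ptrans_smul_one_add_smul {n d : ℕ} (m σ : ℂ)
    (X : Matrix (Fin n × Fin d) (Fin n × Fin d) ℂ) :
    ptrans (m • 1 + σ • X) = m • 1 + σ • ptrans X := by
  ext p q
  simp only [ptrans, Matrix.add_apply, Matrix.smul_apply, Matrix.one_apply, Prod.ext_iff,
    eq_comm (a := q.1)]

variable {M D : Type*} [Fintype M] [Fintype D] [DecidableEq D]

/-- The compression of block matrices by a vector, rescaled so that for a unit vector it sends GUE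
matrices to GUE matrices. -/
def sliceLinear (D : Type*) [Fintype D] [DecidableEq D] (a : EuclideanSpace ℂ M) :
    Matrix (M × D) (M × D) ℂ →ₗ[ℂ] Matrix D D ℂ where
  toFun X := ((√(Fintype.card M) : ℝ) : ℂ) • slice a X
  map_add' X X' := by simp [slice, Matrix.mul_add, Matrix.add_mul]
  map_smul' c X := by simp [slice, smul_comm c]

lemma norm_sliceLinear (a : EuclideanSpace ℂ M) (X : Matrix (M × D) (M × D) ℂ) :
    ‖sliceLinear D a X‖ = √(Fintype.card M) * ‖slice a X‖ := by
  change ‖((√(Fintype.card M) : ℝ) : ℂ) • slice a X‖ = _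
  rw [norm_smul, Complex.norm_real, Real.norm_of_nonneg (Real.sqrt_nonneg _)]

variable [DecidableEq M] {a : EuclideanSpace ℂ M}

lemma norm_sliceLinear_le (ha : ‖a‖ = 1) (X : Matrix (M × D) (M × D) ℂ) :
    ‖sliceLinear D a X‖ ≤ √(Fintype.card M) * ‖X‖ := by
  rw [norm_sliceLinear]
  gcongr
  simpa [slice, ha] using norm_conjTranspose_tensorLeft_mul_mul_le a a X

lemma preservesGUE_sliceLinear [Nonempty M] (ha : ‖a‖ = 1) : PreservesGUE (sliceLinear D a) :=
  fun _ _ _ hE => hE.compression (A := tensorLeft D a)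
    (by simp [conjTranspose_tensorLeft_mul_self, ha]) <| by
      rw [Real.sq_sqrt (Nat.cast_nonneg _), Fintype.card_prod, Nat.cast_mul, mul_inv,
        mul_inv_cancel_left₀ (Nat.cast_ne_zero.2 Fintype.card_ne_zero)]

end LinearImages

namespace IsAsymptSemicircular

variable {Ω : Type*} [MeasurableSpace Ω] {ℙ : Measure Ω} {n : ℕ}
  {Z : (d : ℕ) → Ω → Matrix (Fin n × Fin d) (Fin n × Fin d) ℂ}

lemma ae_tendsto_normalizedTrace (hZ : IsAsymptSemicircular ℙ n Z) :
    ∀ᵐ ω ∂ℙ, ∀ k, Tendsto (fun d => normalizedTrace (Z d ω ^ k)) atTop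
      (𝓝 (semicircleMoment k)) := by
  filter_upwards [hZ.ae_eventually_isNearSemicircular] with ω hω k
  refine Metric.tendsto_nhds.2 fun ε hε => ?_
  obtain ⟨K, hK⟩ := exists_nat_one_div_lt hε
  filter_upwards [hω (max K k)] with d hd
  refine ((hd.abs_sub_lt k (le_max_right K k)).trans_le ?_).trans hK
  gcongr
  exact le_max_left K k

lemma ae_eventually_norm_lt (hZ : IsAsymptSemicircular ℙ n Z) {ε : ℝ} (hε : 0 < ε) :
    ∀ᵐ ω ∂ℙ, ∀ᶠ d in atTop, ‖Z d ω‖ < 2 + ε := by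
  obtain ⟨K, hK⟩ := exists_nat_one_div_lt hε
  filter_upwards [hZ.ae_eventually_isNearSemicircular] with ω hω
  filter_upwards [hω K] with d hd
  linarith [hd.norm_lt]

lemma ae_eventually_isHermitian (hZ : IsAsymptSemicircular ℙ n Z) :
    ∀ᵐ ω ∂ℙ, ∀ᶠ d in atTop, (Z d ω).IsHermitian := by
  filter_upwards [hZ.ae_eventually_isNearSemicircular] with ω hω
  exact (hω 0).mono fun d hd => hd.isHermitian

variable [IsProbabilityMeasure ℙ] [NeZero n]

lemma ae_eventually_norm_ptrans_lt (hZ : IsAsymptSemicircular ℙ n Z) {ε : ℝ} (hε : 0 < ε) :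
    ∀ᵐ ω ∂ℙ, ∀ᶠ d in atTop, ‖ptrans (Z d ω)‖ < 2 + ε :=
  hZ.ae_eventually_norm_map_lt (N' := fun d => Fin n × Fin d) (L := fun d => ptransLinear n d)
    (fun d => by simpa using Nat.le_mul_of_pos_left d (NeZero.pos n))
    (fun _ _ _ _ _ hE => hE.ptrans) (sq_nonneg (n : ℝ)) (fun _ X => norm_ptrans_le X) hε

lemma ae_eventually_norm_slice_lt (hZ : IsAsymptSemicircular ℙ n Z)
    {a : EuclideanSpace ℂ (Fin n)} (ha : ‖a‖ = 1) {ε : ℝ} (hε : 0 < ε) :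
    ∀ᵐ ω ∂ℙ, ∀ᶠ d in atTop, ‖slice a (Z d ω)‖ < 2 / √n + ε := by
  have hn : 0 < √(n : ℝ) := Real.sqrt_pos.2 (Nat.cast_pos.2 (NeZero.pos n))
  have h := hZ.ae_eventually_norm_map_lt (N' := Fin) (L := fun d => sliceLinear (Fin d) a)
    (fun d => by simp) (fun _ _ => preservesGUE_sliceLinear ha) (Real.sqrt_nonneg _)
    (fun _ X => norm_sliceLinear_le ha X) (mul_pos hn hε)
  filter_upwards [h] with ω hω
  filter_upwards [hω] with d hd
  rwa [norm_sliceLinear, Fintype.card_fin, ← lt_div_iff₀' hn, add_div,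
    mul_div_cancel_left₀ _ hn.ne'] at hd

lemma ae_eventually_forall_norm_slice_le (hZ : IsAsymptSemicircular ℙ n Z) {ε : ℝ} (hε : 0 < ε) :
    ∀ᵐ ω ∂ℙ, ∀ᶠ d in atTop, ∀ a : EuclideanSpace ℂ (Fin n), ‖a‖ = 1 →
      ‖slice a (Z d ω)‖ ≤ 2 / √n + ε := by
  obtain ⟨t, ht, htfin, hcover⟩ := (isCompact_sphere (0 : EuclideanSpace ℂ (Fin n)) 1)
    |>.finite_cover_balls (show 0 < ε / 12 by positivity)
  have hnet : ∀ᵐ ω ∂ℙ, ∀ b ∈ t, ∀ᶠ d in atTop, ‖slice b (Z d ω)‖ < 2 / √n + ε / 2 :=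
    (ae_ball_iff htfin.countable).2 fun b hb =>
      hZ.ae_eventually_norm_slice_lt (mem_sphere_zero_iff_norm.1 (ht hb)) (half_pos hε)
  filter_upwards [hnet, hZ.ae_eventually_norm_lt one_pos] with ω hslice hnorm
  filter_upwards [(eventually_all_finite htfin).2 hslice, hnorm] with d hslice hnorm a ha
  obtain ⟨b, hb, hab⟩ := Set.mem_iUnion₂.1 (hcover (mem_sphere_zero_iff_norm.2 ha))
  rw [mem_ball_iff_norm] at hab
  have hdiff : ‖slice a (Z d ω) - slice b (Z d ω)‖ ≤ ε / 12 * (1 + 1) * (2 + 1) := by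
    refine (norm_slice_sub_le a b (Z d ω)).trans ?_
    rw [ha, mem_sphere_zero_iff_norm.1 (ht hb)]
    gcongr
  linarith [norm_sub_norm_le (slice a (Z d ω)) (slice b (Z d ω)), hslice b hb]

lemma ae_eventually_smul_one_add_smul_mem_PPT (hZ : IsAsymptSemicircular ℙ n Z) {m σ : ℝ}
    (hσ : 0 ≤ σ) (h : 2 * σ < m) :
    ∀ᵐ ω ∂ℙ, ∀ᶠ d in atTop, (m : ℂ) • 1 + (σ : ℂ) • Z d ω ∈ PPT n d := by
  obtain ⟨ε, hε, hσε⟩ := exists_pos_mul_lt (sub_pos.2 h) σ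
  have hbound : ∀ {x : ℝ}, x < 2 + ε → σ * x ≤ m := fun hx => by
    linarith [mul_le_mul_of_nonneg_left hx.le hσ]
  filter_upwards [hZ.ae_eventually_isHermitian, hZ.ae_eventually_norm_lt hε,
    hZ.ae_eventually_norm_ptrans_lt hε] with ω hherm hnorm hptrans
  filter_upwards [hherm, hnorm, hptrans] with d hherm hnorm hptrans
  refine ⟨posSemidef_smul_one_add_smul hherm hσ (hbound hnorm), ?_⟩
  rw [ptrans_smul_one_add_smul]
  exact posSemidef_smul_one_add_smul (isHermitian_ptrans hherm) hσ (hbound hptrans)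

/-- `Z` itself is the entanglement witness: it pairs with `m + σ Z` to `σ` in the limit, whereas for
separable matrices the pairing is at most `2 / √n` times the limiting trace `m`. -/
lemma ae_eventually_smul_one_add_smul_notMem_SEP (hZ : IsAsymptSemicircular ℙ n Z) {m σ : ℝ}
    (h : 2 / √n * m < σ) :
    ∀ᵐ ω ∂ℙ, ∀ᶠ d in atTop, (m : ℂ) • 1 + (σ : ℂ) • Z d ω ∉ SEP n d := by
  obtain ⟨ε, hε, hmε⟩ := exists_pos_mul_lt (sub_pos.2 h) m
  filter_upwards [hZ.ae_eventually_isHermitian, hZ.ae_eventually_forall_norm_slice_le hε,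
    hZ.ae_tendsto_normalizedTrace] with ω hherm hslice hmoment
  have hm0 : semicircleMoment 0 = 1 := semicircleMoment_zero
  have hm1 : semicircleMoment 1 = 0 := semicircleMoment_odd 0
  have hm2 : semicircleMoment 2 = 1 := by simpa using semicircleMoment_even 1
  have htrace : ∀ᶠ d in atTop,
      (2 / √n + ε) * (m * normalizedTrace (Z d ω ^ 0) + σ * normalizedTrace (Z d ω ^ 1)) <
        m * normalizedTrace (Z d ω ^ 1) + σ * normalizedTrace (Z d ω ^ 2) := by
    refine Tendsto.eventually_lt
      ((((hmoment 0).const_mul m).add ((hmoment 1).const_mul σ)).const_mul (2 / √n + ε))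
      (((hmoment 1).const_mul m).add ((hmoment 2).const_mul σ)) ?_
    rw [hm0, hm1, hm2]
    linarith
  filter_upwards [hherm, hslice, htrace] with d hherm hslice htrace hsep
  have hle := normalizedTrace_mul_le_of_mem_SEP hherm hslice hsep
  rw [mul_add, mul_smul_comm, mul_smul_comm, mul_one, ← sq, normalizedTrace_add,
    normalizedTrace_add, normalizedTrace_ofReal_smul, normalizedTrace_ofReal_smul,
    normalizedTrace_ofReal_smul, normalizedTrace_ofReal_smul] at hle
  rw [pow_zero, pow_one] at htrace
  exact hle.not_gt htrace

end IsAsymptSemicircular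

end Entanglement

/-- for `n ≥ 17` and `2/√n < σ/m < 1/2`, shifted semicircular
ensembles `SC_{m,σ}` are asymptotically positive semidefinite, PPT, and entangled. -/
theorem stmt11
    {Ω : Type*} [MeasurableSpace Ω] (ℙ : Measure Ω) [IsProbabilityMeasure ℙ]
    (n : ℕ) (hn : 17 ≤ n) (m σ : ℝ) (hm : 0 < m) (hσ : 0 < σ)
    (h1 : 2 / Real.sqrt n < σ / m) (h2 : σ / m < 1 / 2)
    (Y : (d : ℕ) → Ω → Matrix (Fin n × Fin d) (Fin n × Fin d) ℂ)
    (hmeas : ∀ d, Measurable (Y d))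
    (hherm : ∀ d ω, (Y d ω).IsHermitian)
    (hUI : UnitInv ℙ n Y)
    (hconv : StrongConv ℙ n Y (SC m σ)) :
    ∀ᵐ ω ∂ℙ, ∀ᶠ d : ℕ in atTop,
      (Y d ω).PosSemidef ∧ Y d ω ∈ PPT n d ∧ Y d ω ∉ SEP n d := by
  have : NeZero n := ⟨by omega⟩
  have hZ := hconv.isAsymptSemicircular_standardize hσ hmeas hherm hUI
  have hPPT : 2 * σ < m := by
    rw [div_lt_div_iff₀ hm two_pos] at h2
    linarith
  filter_upwards [hZ.ae_eventually_smul_one_add_smul_mem_PPT hσ.le hPPT,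
    hZ.ae_eventually_smul_one_add_smul_notMem_SEP ((lt_div_iff₀ hm).1 h1)] with ω hmem hnotMem
  filter_upwards [hmem, hnotMem] with d hd hd'
  rw [← eq_add_smul_standardize hσ.ne'] at hd hd'
  exact ⟨hd.1, hd, hd'⟩
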